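/- There exist absolute constants c ∈ (0,1) and C > 0 such that for every finite abelian group G of odd order and every nonempty subset A ⊆ G with density α = |A|/|G|, one has T(A) ≥ exp(−C·α^{−1+c}). -/

import Mathlib

/-!
The argument follows Kelley and Meka. If `A` has density about `α` on a Bohr set and contains too
few three-term progressions, then Hölder's inequality makes a high moment, of order about
`log (1 / α)`, of a correlation of `A` exceed that of a random set; positivity of Fourier transforms
lets one pass from an unusually small to an unusually large moment. Sifting, that is, intersecting
randomly chosen translates of `A`, turns this moment into a pair of sets of density
`exp (-O (log (1 / α) ^ 2))` almost all of whose differences are popular differences of `A`. By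
Croot–Sisask almost-periodicity and Chang's inequality this popularity survives averaging over a
Bohr set of slightly larger rank, and there `A` has a translate of density at least `1.001 * α`.
Densities never exceed one, so after `O (log (1 / α))` such increments there must be many
progressions, which gives a lower bound `exp (-O ((1 + log (1 / α)) ^ 9))` for the normalized count.
-/

open Finset
open scoped Pointwise

namespace KelleyMeka

/-! ### Correlations and convolutions -/

section PowerSums

variable {R ι κ β : Type*} [CommSemiring R] [Fintype β]

lemma sum_sum_pow_sum_mul (s : Finset ι) (t : Finset κ) (F : β → ι → R) (H : β → κ → R)
    (p : ℕ) :
    ∑ u ∈ s, ∑ v ∈ t, (∑ b, F b u * H b v) ^ p =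
      ∑ b : Fin p → β, (∑ u ∈ s, ∏ i, F (b i) u) * ∑ v ∈ t, ∏ i, H (b i) v := by
  simp_rw [Fintype.sum_pow, prod_mul_distrib, sum_mul_sum]
  exact (sum_congr rfl fun u _ ↦ sum_comm).trans sum_comm

end PowerSums

section Correlation

variable {G : Type*} [AddCommGroup G] [Fintype G]

/-- The correlation `x ↦ ∑ y, f y * g (y + x)`, the unnormalised `f ∘ g` of the literature. -/
def corr (f g : G → ℝ) (x : G) : ℝ := ∑ y, f y * g (y + x)

/-- The convolution `x ↦ ∑ y, f y * g (x - y)`, unnormalised. -/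
def conv (f g : G → ℝ) (x : G) : ℝ := ∑ y, f y * g (x - y)

lemma corr_sub (f g : G → ℝ) (u v : G) : corr f g (v - u) = ∑ b, f (b + u) * g (b + v) :=
  (Fintype.sum_equiv (Equiv.addRight u) _ _ fun b ↦ by simp).symm

lemma corr_sub' (f g : G → ℝ) (u v : G) : corr f g (v - u) = ∑ b, f (u - b) * g (v - b) :=
  (Fintype.sum_equiv (Equiv.subLeft u) _ _ fun b ↦ by simp).symm

lemma conv_sub (f g : G → ℝ) (u v : G) : conv f g (v - u) = ∑ b, f (b - u) * g (v - b) :=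
  (Fintype.sum_equiv (Equiv.subRight u) _ _ fun b ↦ by simp).symm

lemma corr_swap (f g : G → ℝ) (x : G) : corr f g x = corr g f (-x) :=
  Fintype.sum_equiv (Equiv.addRight x) _ _ fun b ↦ by simp [mul_comm]

lemma conv_comm (f g : G → ℝ) (x : G) : conv f g x = conv g f x :=
  Fintype.sum_equiv (Equiv.subLeft x) _ _ fun b ↦ by simp [mul_comm]

lemma sum_sum_corr_pow_nonneg (f : G → ℝ) (D : Finset G) (p : ℕ) :
    0 ≤ ∑ u ∈ D, ∑ v ∈ D, corr f f (v - u) ^ p := by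
  simp_rw [corr_sub, sum_sum_pow_sum_mul D D (fun b u ↦ f (b + u)) (fun b u ↦ f (b + u))]
  exact sum_nonneg fun b _ ↦ mul_self_nonneg _

/- All three power sums are sums over `b` of products of the two quantities `P b` and `Q b` below,
so the bound is `2 P Q ≤ P ^ 2 + Q ^ 2`. -/
lemma sum_sum_conv_pow_le_sum_sum_corr_pow (f : G → ℝ) (D : Finset G) (p : ℕ) (y : G) :
    ∑ u ∈ D, ∑ v ∈ D, conv f f (v - u + y) ^ p ≤ ∑ u ∈ D, ∑ v ∈ D, corr f f (v - u) ^ p := by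
  set P : (Fin p → G) → ℝ := fun b ↦ ∑ u ∈ D, ∏ i, f (b i - u)
  set Q : (Fin p → G) → ℝ := fun b ↦ ∑ u ∈ D, ∏ i, f (u + y - b i)
  have corr_eq_P : ∑ u ∈ D, ∑ v ∈ D, corr f f (v - u) ^ p = ∑ b, P b * P b := by
    rw [sum_comm, ← sum_sum_pow_sum_mul D D (fun b u ↦ f (b - u)) (fun b u ↦ f (b - u))]
    refine sum_congr rfl fun u _ ↦ sum_congr rfl fun v _ ↦ ?_
    rw [← neg_sub_neg, corr_sub]
    simp only [← sub_eq_add_neg]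
  have corr_eq_Q : ∑ u ∈ D, ∑ v ∈ D, corr f f (v - u) ^ p = ∑ b, Q b * Q b := by
    rw [← sum_sum_pow_sum_mul D D (fun b u ↦ f (u + y - b)) (fun b u ↦ f (u + y - b))]
    refine sum_congr rfl fun u _ ↦ sum_congr rfl fun v _ ↦ ?_
    rw [← add_sub_add_right_eq_sub v u y, corr_sub']
  have conv_eq_PQ : ∑ u ∈ D, ∑ v ∈ D, conv f f (v - u + y) ^ p = ∑ b, P b * Q b := by
    rw [← sum_sum_pow_sum_mul D D (fun b u ↦ f (b - u)) (fun b u ↦ f (u + y - b))]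
    refine sum_congr rfl fun u _ ↦ sum_congr rfl fun v _ ↦ ?_
    rw [← add_sub_right_comm, conv_sub]
  have two_mul_PQ_le : 2 * ∑ b, P b * Q b ≤ ∑ b, P b * P b + ∑ b, Q b * Q b := by
    rw [mul_sum, ← sum_add_distrib]
    exact sum_le_sum fun b _ ↦ by nlinarith [sq_nonneg (P b - Q b)]
  linarith

end Correlation

section Indicator

variable {G : Type*} [DecidableEq G]

/-- The indicator function of `A`, with real values. -/
def ind (A : Finset G) (x : G) : ℝ := if x ∈ A then 1 else 0

/-- The function `1_A - α 1_B`, of mean zero when `A ⊆ B` has relative density `α`. -/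
def balanced (A B : Finset G) (α : ℝ) (z : G) : ℝ := ind A z - α * ind B z

lemma ind_nonneg (A : Finset G) (x : G) : 0 ≤ ind A x := by unfold ind; positivity

lemma ind_le_one (A : Finset G) (x : G) : ind A x ≤ 1 := by unfold ind; split_ifs <;> norm_num

lemma sum_ind_mul [Fintype G] (A : Finset G) (f : G → ℝ) :
    ∑ x, ind A x * f x = ∑ x ∈ A, f x := by
  simp [ind, sum_ite_mem]

lemma sum_ind [Fintype G] (A : Finset G) : ∑ x, ind A x = #A := by
  simpa using sum_ind_mul A 1

variable [AddCommGroup G]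

lemma sum_ind_add (A B : Finset G) (x : G) : ∑ b ∈ B, ind A (x + b) = #{b ∈ B | x + b ∈ A} := by
  simp [ind]

lemma ind_le_ind_add {A B : Finset G} {x : G} (h : ∀ b ∈ B, x + b ∈ A) (b : G) :
    ind B b ≤ ind A (x + b) := by
  by_cases hb : b ∈ B
  · simp [ind, hb, h b hb]
  · simpa [ind, hb] using ind_nonneg A (x + b)

variable [Fintype G]

lemma corr_ind (A B : Finset G) (x : G) : corr (ind A) (ind B) x = ∑ a ∈ A, ind B (a + x) :=
  sum_ind_mul A _

lemma corr_ind_nonneg (A B : Finset G) (x : G) : 0 ≤ corr (ind A) (ind B) x :=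
  sum_nonneg fun _ _ ↦ mul_nonneg (ind_nonneg _ _) (ind_nonneg _ _)

lemma corr_ind_le_card (A B : Finset G) (x : G) : corr (ind A) (ind B) x ≤ #A := by
  rw [corr_ind]
  simpa using sum_le_sum fun a (_ : a ∈ A) ↦ ind_le_one B (a + x)

lemma corr_ind_zero (A : Finset G) : corr (ind A) (ind A) 0 = #A := by
  simp [corr_ind, ind]

lemma conv_ind_eq_corr_neg (f : G → ℝ) {B : Finset G} (hB : ∀ x ∈ B, -x ∈ B) (x : G) :
    conv f (ind B) x = corr f (ind B) (-x) := by
  have mem_iff (y : G) : x - y ∈ B ↔ y + -x ∈ B :=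
    ⟨fun h ↦ by simpa [← sub_eq_add_neg] using hB _ h,
      fun h ↦ by simpa [← sub_eq_add_neg] using hB _ h⟩
  simp only [conv, corr, ind, mem_iff]

end Indicator

/-! ### Almost invariant sets and balanced functions -/

section AlmostInvariant

variable {G : Type*} [AddCommGroup G] [DecidableEq G]

/-- `B` is almost invariant under translation by `V`: adding `V` enlarges it by a factor of at most
`1 + δ`. -/
def AlmostInvariant (B V : Finset G) (δ : ℝ) : Prop := (#(B + V) : ℝ) ≤ (1 + δ) * #B

lemma AlmostInvariant.of_add_subset {B V B' : Finset G} {δ : ℝ} (h : B + V ⊆ B')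
    (hB' : (#B' : ℝ) ≤ (1 + δ) * #B) : AlmostInvariant B V δ :=
  (Nat.cast_le.2 (card_le_card h)).trans hB'

lemma AlmostInvariant.mono {B V W : Finset G} {δ δ' : ℝ} (h : AlmostInvariant B V δ) (hWV : W ⊆ V)
    (hδ : δ ≤ δ') : AlmostInvariant B W δ' := by
  have card_le : (#(B + W) : ℝ) ≤ #(B + V) := by
    exact_mod_cast card_le_card (add_subset_add_left hWV)
  have : (1 + δ) * (#B : ℝ) ≤ (1 + δ') * #B := by gcongr
  exact (card_le.trans h).trans this

lemma AlmostInvariant.card_filter_add_notMem_le {B V : Finset G} {δ : ℝ}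
    (h : AlmostInvariant B V δ) (h0 : 0 ∈ V) {x : G} (hx : x ∈ V) :
    (#{b ∈ B | b + x ∉ B} : ℝ) ≤ δ * #B := by
  set L := {b ∈ B | b + x ∉ B}
  have union_subset : B ∪ L.image (· + x) ⊆ B + V := by
    refine union_subset (fun b hb ↦ by simpa using add_mem_add hb h0) ?_
    exact image_subset_iff.2 fun b hb ↦ add_mem_add (mem_filter.1 hb).1 hx
  have disjoint : Disjoint B (L.image (· + x)) := by
    simp only [L, disjoint_right, mem_image, mem_filter]
    rintro _ ⟨b, ⟨_, hb⟩, rfl⟩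
    exact hb
  have card_le := card_le_card union_subset
  rw [card_union_of_disjoint disjoint, card_image_of_injective _ (add_left_injective x)] at card_le
  have : (#B + #L : ℝ) ≤ #(B + V) := mod_cast card_le
  unfold AlmostInvariant at h
  linarith

lemma AlmostInvariant.sum_sub_le_sum_add {B V : Finset G} {δ : ℝ} (h : AlmostInvariant B V δ)
    (h0 : 0 ∈ V) {f : G → ℝ} (hf₀ : ∀ x, 0 ≤ f x) (hf₁ : ∀ x, f x ≤ 1) {z : G} (hz : -z ∈ V) :
    ∑ b ∈ B, f b - δ * #B ≤ ∑ b ∈ B, f (b + z) := by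
  have stay : ∑ b ∈ B with b + -z ∈ B, f b ≤ ∑ b ∈ B, f (b + z) := by
    calc ∑ b ∈ B with b + -z ∈ B, f b
        = ∑ b ∈ ({b ∈ B | b + -z ∈ B} : Finset G).image (· + -z), f (b + z) := by
          rw [sum_image (add_left_injective (-z)).injOn]
          simp
      _ ≤ ∑ b ∈ B, f (b + z) := by
          refine sum_le_sum_of_subset_of_nonneg ?_ fun _ _ _ ↦ hf₀ _
          exact image_subset_iff.2 fun b hb ↦ (mem_filter.1 hb).2
  have leave : ∑ b ∈ B with b + -z ∉ B, f b ≤ δ * #B := by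
    refine le_trans ?_ (h.card_filter_add_notMem_le h0 hz)
    simpa using sum_le_sum fun b (_ : b ∈ ({b ∈ B | b + -z ∉ B} : Finset G)) ↦ hf₁ b
  linarith [sum_filter_add_sum_filter_not B (fun b ↦ b + -z ∈ B) f]

variable [Fintype G]

lemma AlmostInvariant.card_sub_le_corr_ind {A B V : Finset G} {δ : ℝ} (h : AlmostInvariant B V δ)
    (hA : A ⊆ B) (h0 : 0 ∈ V) {x : G} (hx : x ∈ V) :
    #A - δ * #B ≤ corr (ind A) (ind B) x := by
  have corr_eq : corr (ind A) (ind B) x = #{a ∈ A | a + x ∈ B} := by simp [corr_ind, ind]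
  have card_split : (#{a ∈ A | a + x ∈ B} + #{a ∈ A | a + x ∉ B} : ℝ) = #A :=
    mod_cast card_filter_add_card_filter_not _
  have card_mono : (#{a ∈ A | a + x ∉ B} : ℝ) ≤ #{b ∈ B | b + x ∉ B} :=
    mod_cast card_le_card (filter_subset_filter _ hA)
  linarith [h.card_filter_add_notMem_le h0 hx]

end AlmostInvariant

section Balanced

variable {G : Type*} [AddCommGroup G] [Fintype G] [DecidableEq G]

lemma corr_balanced (A B : Finset G) (α : ℝ) (x : G) :
    corr (balanced A B α) (balanced A B α) x = corr (ind A) (ind A) x -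
      α * corr (ind A) (ind B) x - α * corr (ind B) (ind A) x + α ^ 2 * corr (ind B) (ind B) x := by
  simp only [corr, balanced, mul_sum, ← sum_sub_distrib, ← sum_add_distrib]
  exact sum_congr rfl fun y _ ↦ by ring

lemma conv_balanced (A B : Finset G) (α : ℝ) (x : G) :
    conv (balanced A B α) (balanced A B α) x = conv (ind A) (ind A) x -
      α * conv (ind A) (ind B) x - α * conv (ind B) (ind A) x + α ^ 2 * conv (ind B) (ind B) x := by
  simp only [conv, balanced, mul_sum, ← sum_sub_distrib, ← sum_add_distrib]
  exact sum_congr rfl fun y _ ↦ by ring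

lemma abs_sub_mul_sub_mul_add_sq_mul_le {α β m p q r : ℝ} (hα₀ : 0 ≤ α) (hα₁ : α ≤ 1)
    (hβ : 0 ≤ β) (hp : p ∈ Set.Icc (α * m - β) (α * m)) (hq : q ∈ Set.Icc (α * m - β) (α * m))
    (hr : r ∈ Set.Icc (m - β) m) (c : ℝ) :
    |c - α * p - α * q + α ^ 2 * r - (c - α ^ 2 * m)| ≤ 2 * α * β := by
  obtain ⟨hp₁, hp₂⟩ := hp
  obtain ⟨hq₁, hq₂⟩ := hq
  obtain ⟨hr₁, hr₂⟩ := hr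
  have sq_mul_le : α ^ 2 * β ≤ α * β := mul_le_mul_of_nonneg_right (by nlinarith) hβ
  rw [abs_le]
  constructor <;>
    nlinarith [mul_le_mul_of_nonneg_left hp₁ hα₀, mul_le_mul_of_nonneg_left hp₂ hα₀,
      mul_le_mul_of_nonneg_left hq₁ hα₀, mul_le_mul_of_nonneg_left hq₂ hα₀,
      mul_le_mul_of_nonneg_left hr₁ (sq_nonneg α), mul_le_mul_of_nonneg_left hr₂ (sq_nonneg α)]

variable {A B V : Finset G} {δ α : ℝ}

lemma AlmostInvariant.corr_ind_mem_Icc (h : AlmostInvariant B V δ) (hA : A ⊆ B) (h0 : 0 ∈ V)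
    {x : G} (hx : x ∈ V) : corr (ind A) (ind B) x ∈ Set.Icc (#A - δ * #B : ℝ) #A :=
  ⟨h.card_sub_le_corr_ind hA h0 hx, corr_ind_le_card A B x⟩

lemma AlmostInvariant.abs_corr_balanced_sub_le (h : AlmostInvariant B V δ) (hA : A ⊆ B)
    (h0 : 0 ∈ V) (hα : (#A : ℝ) = α * #B) (hα₀ : 0 ≤ α) (hα₁ : α ≤ 1) (hδ : 0 ≤ δ)
    {x : G} (hx : x ∈ V) (hx' : -x ∈ V) :
    |corr (balanced A B α) (balanced A B α) x - (corr (ind A) (ind A) x - α ^ 2 * #B)| ≤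
      2 * α * (δ * #B) := by
  rw [corr_balanced, corr_swap (ind B) (ind A)]
  exact abs_sub_mul_sub_mul_add_sq_mul_le hα₀ hα₁ (by positivity)
    (hα ▸ h.corr_ind_mem_Icc hA h0 hx) (hα ▸ h.corr_ind_mem_Icc hA h0 hx')
    (h.corr_ind_mem_Icc subset_rfl h0 hx) _

lemma AlmostInvariant.abs_conv_balanced_sub_le (h : AlmostInvariant B V δ) (hA : A ⊆ B)
    (h0 : 0 ∈ V) (hB : ∀ x ∈ B, -x ∈ B) (hα : (#A : ℝ) = α * #B) (hα₀ : 0 ≤ α) (hα₁ : α ≤ 1)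
    (hδ : 0 ≤ δ) {x : G} (hx : -x ∈ V) :
    |conv (balanced A B α) (balanced A B α) x - (conv (ind A) (ind A) x - α ^ 2 * #B)| ≤
      2 * α * (δ * #B) := by
  have conv_mem := hα ▸ conv_ind_eq_corr_neg (ind A) hB x ▸ h.corr_ind_mem_Icc hA h0 hx
  have conv_mem' := conv_ind_eq_corr_neg (ind B) hB x ▸ h.corr_ind_mem_Icc subset_rfl h0 hx
  rw [conv_balanced, conv_comm (ind B) (ind A)]
  exact abs_sub_mul_sub_mul_add_sq_mul_le hα₀ hα₁ (by positivity) conv_mem conv_mem conv_mem' _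

end Balanced

/-! ### Bohr sets -/

section Characters

variable {G : Type*} [AddCommGroup G] [Finite G]

lemma norm_map_sub_sub_one (γ : AddChar G ℂ) (x y : G) : ‖γ (x - y) - 1‖ = ‖γ x - γ y‖ := by
  have factor : γ x - γ y = γ y * (γ (x - y) - 1) := by
    rw [mul_sub, ← AddChar.map_add_eq_mul, add_sub_cancel, mul_one]
  rw [factor, norm_mul, AddChar.norm_apply, one_mul]

lemma norm_map_neg_sub_one (γ : AddChar G ℂ) (x : G) : ‖γ (-x) - 1‖ = ‖γ x - 1‖ := by
  rw [← zero_sub, norm_map_sub_sub_one, AddChar.map_zero_eq_one, norm_sub_rev]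

lemma norm_map_add_sub_one_le (γ : AddChar G ℂ) (x y : G) :
    ‖γ (x + y) - 1‖ ≤ ‖γ x - 1‖ + ‖γ y - 1‖ := by
  rw [← sub_neg_eq_add, norm_map_sub_sub_one, ← norm_map_neg_sub_one γ y]
  simpa only [norm_sub_rev (1 : ℂ)] using norm_sub_le_norm_sub_add_norm_sub (γ x) 1 (γ (-y))

end Characters

section Bohr

variable {G : Type*} [AddCommGroup G] [Fintype G] {Γ Γ' : Finset (AddChar G ℂ)} {r s : ℝ} {x y : G}

/-- The Bohr set of frequencies `Γ` and width `r`. Closeness to `1` is measured by the norm of `ℂ`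
rather than by the argument, so widths are at most `2`. -/
noncomputable def bohr (Γ : Finset (AddChar G ℂ)) (r : ℝ) : Finset G := {x | ∀ γ ∈ Γ, ‖γ x - 1‖ ≤ r}

lemma mem_bohr : x ∈ bohr Γ r ↔ ∀ γ ∈ Γ, ‖γ x - 1‖ ≤ r := by simp [bohr]

lemma zero_mem_bohr (Γ : Finset (AddChar G ℂ)) (hr : 0 ≤ r) : (0 : G) ∈ bohr Γ r := by
  simp [mem_bohr, hr]

lemma neg_mem_bohr (hx : x ∈ bohr Γ r) : -x ∈ bohr Γ r :=
  mem_bohr.2 fun γ hγ ↦ (norm_map_neg_sub_one γ x).trans_le (mem_bohr.1 hx γ hγ)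

lemma add_mem_bohr (hx : x ∈ bohr Γ r) (hy : y ∈ bohr Γ s) : x + y ∈ bohr Γ (r + s) :=
  mem_bohr.2 fun γ hγ ↦
    (norm_map_add_sub_one_le γ x y).trans (add_le_add (mem_bohr.1 hx γ hγ) (mem_bohr.1 hy γ hγ))

lemma sub_mem_bohr (hx : x ∈ bohr Γ r) (hy : y ∈ bohr Γ s) : x - y ∈ bohr Γ (r + s) :=
  sub_eq_add_neg x y ▸ add_mem_bohr hx (neg_mem_bohr hy)

lemma bohr_anti_mono (hΓ : Γ ⊆ Γ') (hrs : r ≤ s) : bohr Γ' r ⊆ bohr Γ s :=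
  fun _ hx ↦ mem_bohr.2 fun γ hγ ↦ (mem_bohr.1 hx γ (hΓ hγ)).trans hrs

lemma bohr_mono (hrs : r ≤ s) : bohr Γ r ⊆ bohr Γ s := bohr_anti_mono subset_rfl hrs

lemma sum_mem_bohr {ι : Type*} (t : Finset ι) {f : ι → G} (hf : ∀ i ∈ t, f i ∈ bohr Γ r) :
    ∑ i ∈ t, f i ∈ bohr Γ (#t * r) := by
  classical
  induction t using Finset.induction_on with
  | empty => simpa using zero_mem_bohr Γ le_rfl
  | insert i t hi ih =>
    rw [sum_insert hi, card_insert_of_notMem hi, Nat.cast_succ, add_one_mul, add_comm (f i)]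
    exact add_mem_bohr (ih fun j hj ↦ hf j (mem_insert_of_mem hj)) (hf i (mem_insert_self i t))

lemma nsmul_mem_bohr [DecidableEq (AddChar G ℂ)] {t : ℕ} (hx : x ∈ bohr (Γ.image (· ^ t)) r) :
    t • x ∈ bohr Γ r :=
  mem_bohr.2 fun γ hγ ↦ by
    simpa [AddChar.map_nsmul_eq_pow] using mem_bohr.1 hx (γ ^ t) (mem_image_of_mem _ hγ)

end Bohr

section BohrSize

variable {G : Type*} [AddCommGroup G] [Fintype G]

lemma floor_mul_mem_Icc (k : ℕ) {a : ℝ} (ha : |a| ≤ 1) : ⌊k * a⌋ ∈ Icc (-k : ℤ) k := by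
  obtain ⟨ha₁, ha₂⟩ := abs_le.1 ha
  rw [mem_Icc, Int.le_floor, ← Int.cast_le (R := ℝ)]
  refine ⟨?_, (Int.floor_le _).trans ?_⟩ <;> push_cast <;>
    nlinarith [k.cast_nonneg (α := ℝ)]

lemma abs_sub_le_of_floor_mul_eq {k a b : ℝ} (hk : 0 < k) (h : ⌊k * a⌋ = ⌊k * b⌋) :
    |a - b| ≤ 1 / k := by
  have := Int.abs_sub_lt_one_of_floor_eq_floor h
  rw [← mul_sub, abs_mul, abs_of_pos hk] at this
  rw [le_div_iff₀' hk]
  exact this.le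

-- Two points whose characters lie in the same cells of a grid of mesh `1 / k` in `ℂ` differ by an
-- element of the Bohr set.
lemma card_le_pow_mul_card_bohr (Γ : Finset (AddChar G ℂ)) {k : ℕ} (hk : 0 < k) :
    Fintype.card G ≤ ((2 * k + 1) ^ 2) ^ #Γ * #(bohr Γ (2 / k)) := by
  classical
  let grid : Finset (ℤ × ℤ) := Icc (-k : ℤ) k ×ˢ Icc (-k : ℤ) k
  let cell (x : G) (γ : Γ) : ℤ × ℤ := (⌊k * (γ.1 x).re⌋, ⌊k * (γ.1 x).im⌋)
  have card_grid : #grid = (2 * k + 1) ^ 2 := by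
    have : ((k : ℤ) + 1 - -(k : ℤ)).toNat = 2 * k + 1 := by omega
    rw [card_product, Int.card_Icc, this, sq]
  have cell_mem (x : G) : cell x ∈ Fintype.piFinset fun _ : Γ ↦ grid := by
    refine Fintype.mem_piFinset.2 fun γ ↦ mem_product.2 ?_
    have norm_le : ‖γ.1 x‖ ≤ 1 := (AddChar.norm_apply _ _).le
    exact ⟨floor_mul_mem_Icc k ((Complex.abs_re_le_norm _).trans norm_le),
      floor_mul_mem_Icc k ((Complex.abs_im_le_norm _).trans norm_le)⟩
  have sub_mem {x y : G} (hxy : cell x = cell y) : x - y ∈ bohr Γ (2 / k) := by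
    refine mem_bohr.2 fun γ hγ ↦ ?_
    obtain ⟨hre, him⟩ := Prod.mk.inj (congrFun hxy ⟨γ, hγ⟩)
    have hk' : (0 : ℝ) < k := mod_cast hk
    calc ‖γ (x - y) - 1‖ = ‖γ x - γ y‖ := norm_map_sub_sub_one γ x y
      _ ≤ |(γ x).re - (γ y).re| + |(γ x).im - (γ y).im| := Complex.norm_le_abs_re_add_abs_im _
      _ ≤ 1 / k + 1 / k :=
        add_le_add (abs_sub_le_of_floor_mul_eq hk' hre) (abs_sub_le_of_floor_mul_eq hk' him)
      _ = 2 / k := by ring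
  have card_fibre_le : ∀ c ∈ Fintype.piFinset fun _ : Γ ↦ grid,
      #{x | cell x = c} ≤ #(bohr Γ (2 / k)) := by
    intro c _
    rcases ({x | cell x = c} : Finset G).eq_empty_or_nonempty with h | ⟨y, hy⟩
    · simp [h]
    · refine card_le_card_of_injOn (· - y) (fun x hx ↦ sub_mem ?_) sub_left_injective.injOn
      exact (mem_filter.1 hx).2.trans (mem_filter.1 hy).2.symm
  have := card_le_mul_card_image_of_maps_to (fun x _ ↦ cell_mem x) _ card_fibre_le
  rwa [card_univ, Fintype.card_piFinset, prod_const, card_univ, Fintype.card_coe, card_grid,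
    mul_comm] at this

lemma card_le_four_pow_mul_card_bohr (Γ : Finset (AddChar G ℂ)) (s : ℕ) :
    Fintype.card G ≤ 4 ^ (#Γ * (s + 3)) * #(bohr Γ ((1 / 2) ^ s)) := by
  have width_eq : (2 : ℝ) / (2 ^ (s + 1) : ℕ) = (1 / 2) ^ s := by
    rw [pow_succ]; push_cast; field_simp; simp
  have cells_le : (2 * 2 ^ (s + 1) + 1) ^ 2 ≤ 4 ^ (s + 3) := by
    rw [show 4 = 2 ^ 2 from rfl, ← pow_mul, mul_comm 2 (s + 3), pow_mul]
    gcongr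
    have : 1 ≤ 2 ^ s := Nat.one_le_two_pow
    simp only [pow_succ]
    omega
  refine (card_le_pow_mul_card_bohr Γ (k := 2 ^ (s + 1)) (by positivity)).trans ?_
  rw [width_eq, mul_comm #Γ, pow_mul]
  gcongr

lemma card_mul_quarter_pow_le_card_bohr {Γ : Finset (AddChar G ℂ)} {d s : ℕ} {r : ℝ}
    (hd : #Γ ≤ d) (hr : (1 / 2) ^ s ≤ r) :
    (Fintype.card G : ℝ) * (1 / 4) ^ (d * (s + 3)) ≤ #(bohr Γ r) := by
  have card_le : (Fintype.card G : ℝ) ≤ 4 ^ (d * (s + 3)) * #(bohr Γ r) :=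
    mod_cast (card_le_four_pow_mul_card_bohr Γ s).trans <| by
      gcongr
      · simp
      · exact bohr_mono hr
  rwa [one_div_pow, mul_one_div, div_le_iff₀' (by positivity)]

end BohrSize

section BohrRegularity

lemma exists_succ_le_mul {b : ℕ → ℝ} {t : ℝ} {m : ℕ} (hm : 0 < m) (ht : 0 < t)
    (hb : b m ≤ t ^ m * b 0) : ∃ i < m, b (i + 1) ≤ t * b i := by
  by_contra! grows
  have pow_mul_lt : ∀ i, i + 1 ≤ m → t ^ (i + 1) * b 0 < b (i + 1) := by
    intro i hi
    induction i with
    | zero => simpa using grows 0 hi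
    | succ i ih =>
      calc t ^ (i + 1 + 1) * b 0 = t * (t ^ (i + 1) * b 0) := by ring
        _ < t * b (i + 1) := by gcongr; exact ih (by omega)
        _ < b (i + 1 + 1) := grows _ hi
  have := pow_mul_lt (m - 1) (by omega)
  rw [Nat.sub_add_cancel hm] at this
  exact this.not_ge hb

lemma two_pow_le_one_add_half_pow_pow (e j : ℕ) :
    (2 : ℝ) ^ j ≤ (1 + (1 / 2 : ℝ) ^ e) ^ (2 ^ e * j) := by
  have half_pow_pos : (0 : ℝ) < (1 / 2) ^ e := by positivity
  have bernoulli := one_add_mul_le_pow (a := (1 / 2 : ℝ) ^ e) (by linarith) (2 ^ e)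
  have cancel : ((2 ^ e : ℕ) : ℝ) * (1 / 2) ^ e = 1 := by
    push_cast; rw [← mul_pow]; norm_num
  rw [pow_mul]
  exact pow_le_pow_left₀ (by norm_num) (by linarith) _

variable {G : Type*} [AddCommGroup G] [Fintype G]

lemma bohr_add_bohr_subset [DecidableEq G] (Γ : Finset (AddChar G ℂ)) (r s : ℝ) :
    bohr Γ r + bohr Γ s ⊆ bohr Γ (r + s) :=
  add_subset_iff.2 fun _ hx _ hy ↦ add_mem_bohr hx hy

lemma card_le_one_add_half_pow_pow_mul_card_bohr {Γ : Finset (AddChar G ℂ)} {s q : ℕ} (e : ℕ)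
    (hΓ : #Γ ≤ 2 ^ q) (hs : s + 3 ≤ 2 ^ q) :
    (Fintype.card G : ℝ) ≤
      (1 + (1 / 2) ^ e) ^ (2 ^ e * 2 ^ (2 * q + 1)) * #(bohr Γ ((1 / 2) ^ s)) := by
  have exponent_le : 2 * (#Γ * (s + 3)) ≤ 2 ^ (2 * q + 1) := by
    have : #Γ * (s + 3) ≤ 2 ^ q * 2 ^ q := Nat.mul_le_mul hΓ hs
    rw [pow_succ, two_mul q, pow_add]
    linarith
  calc (Fintype.card G : ℝ) ≤ 4 ^ (#Γ * (s + 3)) * #(bohr Γ ((1 / 2) ^ s)) :=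
        mod_cast card_le_four_pow_mul_card_bohr Γ s
    _ = 2 ^ (2 * (#Γ * (s + 3))) * #(bohr Γ ((1 / 2) ^ s)) := by rw [pow_mul 2 2]; norm_num
    _ ≤ _ := by
      gcongr
      exact (pow_le_pow_right₀ (by norm_num) exponent_le).trans
        (two_pow_le_one_add_half_pow_pow e _)

-- As the width grows from `2 ^ -(s + 1)` to `2 ^ -s` in steps of `κ`, the Bohr set grows by at most
-- `4 ^ (#Γ * (s + 4))` in total, hence by at most `1 + 2 ^ -e` in some step.
lemma exists_almostInvariant_bohr [DecidableEq G] {Γ : Finset (AddChar G ℂ)} {s q : ℕ} (e : ℕ)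
    (hΓ : #Γ ≤ 2 ^ q) (hs : s + 4 ≤ 2 ^ q) :
    ∃ r : ℝ, (1 / 2) ^ (s + 1) ≤ r ∧ r ≤ (1 / 2) ^ s ∧
      AlmostInvariant (bohr Γ r) (bohr Γ ((1 / 2) ^ (s + 2 * q + e + 2))) ((1 / 2) ^ e) := by
  set κ : ℝ := (1 / 2) ^ (s + 2 * q + e + 2) with hκ
  set m : ℕ := 2 ^ e * 2 ^ (2 * q + 1) with hm
  let width (i : ℕ) : ℝ := (1 / 2) ^ (s + 1) + i * κ
  have m_mul_κ : m * κ = (1 / 2) ^ (s + 1) := by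
    rw [hm, hκ, show s + 2 * q + e + 2 = (s + 1) + (e + (2 * q + 1)) by ring, pow_add _ (s + 1)]
    push_cast
    rw [← pow_add, mul_left_comm, ← mul_pow]
    norm_num
  have total_growth : (#(bohr Γ (width m)) : ℝ) ≤
      (1 + (1 / 2) ^ e) ^ m * #(bohr Γ (width 0)) := by
    rw [show width 0 = (1 / 2) ^ (s + 1) by simp [width]]
    exact (Nat.cast_le.2 (card_le_univ _)).trans
      (card_le_one_add_half_pow_pow_mul_card_bohr e hΓ (by omega))
  obtain ⟨i, hi, step_le⟩ := exists_succ_le_mul (b := fun i ↦ (#(bohr Γ (width i)) : ℝ))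
    (by positivity) (by positivity) total_growth
  refine ⟨width i, le_add_of_nonneg_right (by positivity), ?_, .of_add_subset ?_ step_le⟩
  · calc width i ≤ (1 / 2) ^ (s + 1) + m * κ := by simp only [width]; gcongr
      _ = (1 / 2) ^ s := by rw [m_mul_κ]; ring
  · convert bohr_add_bohr_subset Γ (width i) κ using 2
    simp only [width]
    push_cast
    ring

end BohrRegularity

/-! ### Hereditary density -/

section HereditarilyDense

variable {G : Type*} [AddCommGroup G] [Fintype G] [DecidableEq G] {A B V W : Finset G} {a b δ : ℝ}

/-- `A` has density at least `a` on some translate of every nonnegative weight supported on `V`.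
Unlike density at least `a` on a translate of `V`, this passes to subsets of `V`, so that it can be
carried through an iteration in which `V` shrinks. -/
def HereditarilyDense (A V : Finset G) (a : ℝ) : Prop :=
  ∀ w : G → ℝ, (∀ z, 0 ≤ w z) → (∀ z, w z ≠ 0 → z ∈ V) →
    ∃ x, a * ∑ z, w z ≤ ∑ z, w z * ind A (x + z)

namespace HereditarilyDense

lemma mono (h : HereditarilyDense A V a) (hWV : W ⊆ V) : HereditarilyDense A W a :=
  fun w hw hsupp ↦ h w hw fun z hz ↦ hWV (hsupp z hz)

lemma anti (h : HereditarilyDense A V a) (hba : b ≤ a) : HereditarilyDense A V b := by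
  intro w hw hsupp
  obtain ⟨x, hx⟩ := h w hw hsupp
  exact ⟨x, (mul_le_mul_of_nonneg_right hba (sum_nonneg fun z _ ↦ hw z)).trans hx⟩

lemma le_one (h : HereditarilyDense A V a) (h0 : 0 ∈ V) : a ≤ 1 := by
  obtain ⟨x, hx⟩ := h (ind {0}) (ind_nonneg _) fun z hz ↦ by
    have : z = 0 := by simpa [ind] using hz
    exact this ▸ h0
  rw [sum_ind, sum_ind_mul] at hx
  simpa using hx.trans_eq (sum_singleton _ _) |>.trans (ind_le_one A _)

end HereditarilyDense

lemma AlmostInvariant.hereditarilyDense (h : AlmostInvariant B V δ) (hB : B.Nonempty)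
    (h0 : 0 ∈ V) (hV : ∀ z ∈ V, -z ∈ V) {x : G} (hx : a * #B ≤ ∑ b ∈ B, ind A (x + b)) :
    HereditarilyDense A V (a - δ) := by
  intro w hw hsupp
  have translate_dense (z : G) (hz : w z ≠ 0) : (a - δ) * #B ≤ ∑ b ∈ B, ind A (x + b + z) := by
    have := h.sum_sub_le_sum_add h0 (fun b ↦ ind_nonneg A (x + b)) (fun b ↦ ind_le_one A (x + b))
      (hV z (hsupp z hz))
    simp only [← add_assoc] at this
    linarith
  have average : ∑ _b ∈ B, (a - δ) * ∑ z, w z ≤ ∑ b ∈ B, ∑ z, w z * ind A (x + b + z) := by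
    rw [sum_comm, sum_const, nsmul_eq_mul, mul_sum, mul_sum]
    refine sum_le_sum fun z _ ↦ ?_
    rw [← mul_sum]
    rcases eq_or_ne (w z) 0 with hz | hz
    · simp [hz]
    · linarith [mul_le_mul_of_nonneg_left (translate_dense z hz) (hw z)]
  obtain ⟨b, _, hb⟩ := exists_le_of_sum_le hB average
  exact ⟨x + b, hb⟩

lemma hereditarilyDense_of_le_card (ha : a * Fintype.card G ≤ #A) (h0 : 0 ∈ V)
    (hV : ∀ z ∈ V, -z ∈ V) : HereditarilyDense A V a := by
  have invariant : AlmostInvariant univ V 0 := .of_add_subset (subset_univ _) (by simp)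
  refine sub_zero a ▸ invariant.hereditarilyDense univ_nonempty h0 hV (x := 0) ?_
  simpa [sum_ind] using ha

end HereditarilyDense

/-! ### Sampling and almost periodicity -/

section Hoeffding

variable {ι : Type*} {A : Finset ι} {Y : ι → ℝ} {δ : ℝ}

lemma sum_exp_half_mul_le (hY : ∀ u ∈ A, |Y u| ≤ 1) (hsum : ∑ u ∈ A, Y u = 0)
    (hδ : 0 < δ) (hδ₁ : δ ≤ 1) :
    ∑ u ∈ A, Real.exp (δ / 2 * Y u) ≤ #A * Real.exp (δ ^ 2 / 4) := by
  have exp_le (u) (hu : u ∈ A) : Real.exp (δ / 2 * Y u) ≤ 1 + δ ^ 2 / 4 + δ / 2 * Y u := by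
    have small : |δ / 2 * Y u| ≤ 1 := by
      rw [abs_mul, abs_of_pos (by positivity)]
      nlinarith [hY u hu, abs_nonneg (Y u)]
    have taylor := (abs_le.1 (Real.abs_exp_sub_one_sub_id_le small)).2
    have sq_le : Y u ^ 2 ≤ 1 := (sq_le_one_iff_abs_le_one _).2 (hY u hu)
    nlinarith [mul_le_mul_of_nonneg_left sq_le (sq_nonneg (δ / 2))]
  calc ∑ u ∈ A, Real.exp (δ / 2 * Y u) ≤ ∑ u ∈ A, (1 + δ ^ 2 / 4 + δ / 2 * Y u) :=
        sum_le_sum exp_le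
    _ = #A * (δ ^ 2 / 4 + 1) := by
        rw [sum_add_distrib, ← mul_sum, hsum, sum_const, nsmul_eq_mul]
        ring
    _ ≤ #A * Real.exp (δ ^ 2 / 4) := by
        gcongr
        exact Real.add_one_le_exp _

lemma card_filter_lt_sum_le (hY : ∀ u ∈ A, |Y u| ≤ 1) (hsum : ∑ u ∈ A, Y u = 0) (n : ℕ)
    (hδ : 0 < δ) (hδ₁ : δ ≤ 1) :
    (#{a ∈ Fintype.piFinset fun _ : Fin n ↦ A | δ * n < ∑ i, Y (a i)} : ℝ) ≤
      Real.exp (-(δ ^ 2 * n / 4)) * #A ^ n := by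
  have mgf_eq : ∑ a ∈ Fintype.piFinset fun _ : Fin n ↦ A, Real.exp (δ / 2 * ∑ i, Y (a i)) =
      (∑ u ∈ A, Real.exp (δ / 2 * Y u)) ^ n := by
    simpa [mul_sum, Real.exp_sum] using
      (prod_univ_sum (fun _ : Fin n ↦ A) fun _ u ↦ Real.exp (δ / 2 * Y u)).symm
  have markov : (#{a ∈ Fintype.piFinset fun _ : Fin n ↦ A | δ * n < ∑ i, Y (a i)} : ℝ) *
      Real.exp (δ / 2 * (δ * n)) ≤
        ∑ a ∈ Fintype.piFinset fun _ : Fin n ↦ A, Real.exp (δ / 2 * ∑ i, Y (a i)) := by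
    rw [← nsmul_eq_mul, ← sum_const]
    refine (sum_le_sum fun a ha ↦ ?_).trans
      (sum_le_sum_of_subset_of_nonneg (filter_subset _ _) fun _ _ _ ↦ (Real.exp_pos _).le)
    have := (mem_filter.1 ha).2.le
    gcongr
  refine le_of_mul_le_mul_right (markov.trans ?_) (Real.exp_pos (δ / 2 * (δ * n)))
  calc ∑ a ∈ Fintype.piFinset fun _ : Fin n ↦ A, Real.exp (δ / 2 * ∑ i, Y (a i))
      ≤ (#A * Real.exp (δ ^ 2 / 4)) ^ n := by
        rw [mgf_eq]
        gcongr
        exact sum_exp_half_mul_le hY hsum hδ hδ₁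
    _ = Real.exp (-(δ ^ 2 * n / 4)) * #A ^ n * Real.exp (δ / 2 * (δ * n)) := by
        rw [mul_pow, ← Real.exp_nat_mul, mul_right_comm, ← Real.exp_add, mul_comm]
        congr 2
        ring

lemma card_filter_lt_abs_sum_le (hY : ∀ u ∈ A, |Y u| ≤ 1) (hsum : ∑ u ∈ A, Y u = 0) (n : ℕ)
    (hδ : 0 < δ) (hδ₁ : δ ≤ 1) :
    (#{a ∈ Fintype.piFinset fun _ : Fin n ↦ A | δ * n < |∑ i, Y (a i)|} : ℝ) ≤
      2 * Real.exp (-(δ ^ 2 * n / 4)) * #A ^ n := by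
  classical
  have upper := card_filter_lt_sum_le hY hsum n hδ hδ₁
  have lower := card_filter_lt_sum_le (Y := fun u ↦ -Y u) (by simpa using hY) (by simp [hsum])
    n hδ hδ₁
  have union_bound := card_union_le
    {a ∈ Fintype.piFinset fun _ : Fin n ↦ A | δ * n < ∑ i, Y (a i)}
    {a ∈ Fintype.piFinset fun _ : Fin n ↦ A | δ * n < ∑ i, -Y (a i)}
  simp_rw [← filter_or, sum_neg_distrib, ← lt_abs] at union_bound
  simp_rw [sum_neg_distrib] at lower
  have := (Nat.cast_le (α := ℝ)).2 union_bound
  push_cast at this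
  linarith

end Hoeffding

section AlmostPeriods

variable {G : Type*} [AddCommGroup G] [DecidableEq G] {A E S Ω : Finset G} {K δ : ℝ} {n : ℕ}

/-- The density of `x - S` in `A`, that is, the normalised convolution of `A` and `S` at `x`. -/
noncomputable def reflDensity (A S : Finset G) (x : G) : ℝ := (∑ u ∈ A, ind S (x - u)) / #A

/-- The empirical version of `reflDensity`, for a sample `a` in place of the set `A`. -/
noncomputable def sampleDensity (S : Finset G) (a : Fin n → G) (x : G) : ℝ :=
  (∑ i, ind S (x - a i)) / n

/-- The points of `Ω` at which the sample `a` misjudges `reflDensity A S` by more than `δ`. -/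
noncomputable def sampleErrors (A S Ω : Finset G) (δ : ℝ) (a : Fin n → G) : Finset G :=
  {x ∈ Ω | δ < |sampleDensity S a x - reflDensity A S x|}

lemma reflDensity_nonneg (A S : Finset G) (x : G) : 0 ≤ reflDensity A S x :=
  div_nonneg (sum_nonneg fun _ _ ↦ ind_nonneg _ _) (by positivity)

lemma reflDensity_le_one (A S : Finset G) (x : G) : reflDensity A S x ≤ 1 := by
  refine div_le_one_of_le₀ ?_ (by positivity)
  simpa using sum_le_sum fun u (_ : u ∈ A) ↦ ind_le_one S (x - u)

lemma sampleDensity_sub_const (S : Finset G) (b : Fin n → G) (x e e' : G) :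
    sampleDensity S (fun i ↦ b i - e) x =
      sampleDensity S (fun i ↦ b i - e') (x + (e - e')) := by
  simp only [sampleDensity]
  congr! 3
  abel

lemma card_filter_lt_abs_sampleDensity_sub_le (hA : A.Nonempty) (S : Finset G) (hn : 0 < n)
    (hδ : 0 < δ) (hδ₁ : δ ≤ 1) (x : G) :
    (#{a ∈ Fintype.piFinset fun _ : Fin n ↦ A |
        δ < |sampleDensity S a x - reflDensity A S x|} : ℝ) ≤
      2 * Real.exp (-(δ ^ 2 * n / 4)) * #A ^ n := by
  have hA₀ : (#A : ℝ) ≠ 0 := by simpa using hA.ne_empty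
  have hn₀ : (0 : ℝ) < n := by exact_mod_cast hn
  have deviation_le (u) (_ : u ∈ A) : |ind S (x - u) - reflDensity A S x| ≤ 1 := by
    rw [abs_le]
    constructor <;> linarith [reflDensity_nonneg A S x, reflDensity_le_one A S x,
      ind_nonneg S (x - u), ind_le_one S (x - u)]
  have deviation_sum : ∑ u ∈ A, (ind S (x - u) - reflDensity A S x) = 0 := by
    rw [sum_sub_distrib, sum_const, nsmul_eq_mul, reflDensity, mul_div_cancel₀ _ hA₀, sub_self]
  have total_deviation (a : Fin n → G) : |∑ i, (ind S (x - a i) - reflDensity A S x)| =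
      |sampleDensity S a x - reflDensity A S x| * n := by
    have : ∑ i, (ind S (x - a i) - reflDensity A S x) =
        (sampleDensity S a x - reflDensity A S x) * n := by
      rw [sum_sub_distrib, sum_const, card_univ, Fintype.card_fin, nsmul_eq_mul, sampleDensity]
      field_simp
    rw [this, abs_mul, Nat.abs_cast]
  simpa only [total_deviation, mul_lt_mul_iff_left₀ hn₀] using
    card_filter_lt_abs_sum_le deviation_le deviation_sum n hδ hδ₁

lemma sum_card_sampleErrors_le (hA : A.Nonempty) (S Ω : Finset G) (hn : 0 < n) (hδ : 0 < δ)
    (hδ₁ : δ ≤ 1) :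
    ∑ a ∈ Fintype.piFinset fun _ : Fin n ↦ A, (#(sampleErrors A S Ω δ a) : ℝ) ≤
      #Ω * (2 * Real.exp (-(δ ^ 2 * n / 4)) * #A ^ n) := by
  have double_count : ∑ a ∈ Fintype.piFinset fun _ : Fin n ↦ A, (#(sampleErrors A S Ω δ a) : ℝ) =
      ∑ x ∈ Ω, (#{a ∈ Fintype.piFinset fun _ : Fin n ↦ A |
        δ < |sampleDensity S a x - reflDensity A S x|} : ℝ) := by
    simp only [sampleErrors, card_filter]
    push_cast
    exact sum_comm
  rw [double_count, ← nsmul_eq_mul]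
  exact sum_le_card_nsmul _ _ _ fun x _ ↦
    card_filter_lt_abs_sampleDensity_sub_le hA S hn hδ hδ₁ x

lemma card_pow_le_two_mul_card_filter_card_sampleErrors_le (hA : A.Nonempty)
    (hΩ : #Ω ≤ K * #A) (hK : 0 < K) (hδ : 0 < δ) (hδ₁ : δ ≤ 1) (hn : 0 < n)
    (hexp : 2 * Real.exp (-(δ ^ 2 * n / 4)) ≤ δ / (2 * K)) :
    (#A : ℝ) ^ n ≤
      2 * #{a ∈ Fintype.piFinset fun _ : Fin n ↦ A | #(sampleErrors A S Ω δ a) ≤ δ * #A} := by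
  set P := Fintype.piFinset fun _ : Fin n ↦ A with hP
  have card_P : (#P : ℝ) = (#A : ℝ) ^ n := by simp [P]
  have markov : (#{a ∈ P | ¬ #(sampleErrors A S Ω δ a) ≤ δ * #A} : ℝ) * (δ * #A) ≤
      ∑ a ∈ P, (#(sampleErrors A S Ω δ a) : ℝ) := by
    rw [← nsmul_eq_mul]
    refine (card_nsmul_le_sum _ _ _ fun a ha ↦ (not_le.1 (mem_filter.1 ha).2).le).trans ?_
    exact sum_le_sum_of_subset_of_nonneg (filter_subset _ _) fun _ _ _ ↦ by positivity
  have total : ∑ a ∈ P, (#(sampleErrors A S Ω δ a) : ℝ) ≤ (#A : ℝ) ^ n / 2 * (δ * #A) :=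
    calc ∑ a ∈ P, (#(sampleErrors A S Ω δ a) : ℝ)
        ≤ #Ω * (2 * Real.exp (-(δ ^ 2 * n / 4)) * #A ^ n) :=
          sum_card_sampleErrors_le hA S Ω hn hδ hδ₁
      _ ≤ (K * #A) * (δ / (2 * K) * #A ^ n) := by gcongr
      _ = (#A : ℝ) ^ n / 2 * (δ * #A) := by field_simp
  have few_bad := le_of_mul_le_mul_right (markov.trans total) (by positivity)
  have split : (#{a ∈ P | #(sampleErrors A S Ω δ a) ≤ δ * #A} : ℝ) +
      #{a ∈ P | ¬ #(sampleErrors A S Ω δ a) ≤ δ * #A} = #P := by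
    exact_mod_cast card_filter_add_card_filter_not _
  linarith

lemma card_mul_card_le_sum_card_filter_sub_mem {L : Finset (Fin n → G)}
    (hL : L ⊆ Fintype.piFinset fun _ ↦ A) (hE : A + E ⊆ Ω) :
    #E * #L ≤ ∑ b ∈ Fintype.piFinset fun _ : Fin n ↦ Ω, #{e ∈ E | (fun i ↦ b i - e) ∈ L} := by
  have many (e) (he : e ∈ E) :
      #L ≤ #{b ∈ Fintype.piFinset fun _ : Fin n ↦ Ω | (fun i ↦ b i - e) ∈ L} := by
    refine card_le_card_of_injOn (fun a i ↦ a i + e) (fun a ha ↦ ?_) fun a _ b _ hab ↦ ?_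
    · refine mem_coe.2 (mem_filter.2 ⟨Fintype.mem_piFinset.2 fun i ↦ ?_, ?_⟩)
      · exact hE (add_mem_add (Fintype.mem_piFinset.1 (hL ha) i) he)
      · simpa using ha
    · funext i
      exact add_left_injective e (congrFun hab i)
  calc #E * #L ≤
      ∑ e ∈ E, #{b ∈ Fintype.piFinset fun _ : Fin n ↦ Ω | (fun i ↦ b i - e) ∈ L} := by
        simpa using card_nsmul_le_sum _ _ _ many
    _ = ∑ b ∈ Fintype.piFinset fun _ : Fin n ↦ Ω, #{e ∈ E | (fun i ↦ b i - e) ∈ L} := by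
        simp only [card_filter]
        exact sum_comm

lemma exists_card_le_mul_card_filter_sub_mem (hA : A.Nonempty) {L : Finset (Fin n → G)}
    (hL : L ⊆ Fintype.piFinset fun _ ↦ A) (hAL : (#A : ℝ) ^ n ≤ 2 * #L) (hE : A + E ⊆ Ω)
    (hΩ : #Ω ≤ K * #A) (hK : 0 < K) :
    ∃ b : Fin n → G, #E ≤ 2 * K ^ n * #{e ∈ E | (fun i ↦ b i - e) ∈ L} := by
  rcases E.eq_empty_or_nonempty with rfl | hE₀
  · exact ⟨0, by simp⟩
  have hΩ₀ : (Fintype.piFinset fun _ : Fin n ↦ Ω).Nonempty := by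
    simpa using fun _ ↦ (hA.add hE₀).mono hE
  have count : (#E * #L : ℝ) ≤ ∑ b ∈ Fintype.piFinset fun _ : Fin n ↦ Ω,
      (#{e ∈ E | (fun i ↦ b i - e) ∈ L} : ℝ) := by
    exact_mod_cast card_mul_card_le_sum_card_filter_sub_mem hL hE
  have average : ∑ _b ∈ Fintype.piFinset fun _ : Fin n ↦ Ω, (#E : ℝ) ≤
      ∑ b ∈ Fintype.piFinset fun _ : Fin n ↦ Ω,
        2 * K ^ n * #{e ∈ E | (fun i ↦ b i - e) ∈ L} :=
    calc ∑ _b ∈ Fintype.piFinset fun _ : Fin n ↦ Ω, (#E : ℝ) = #Ω ^ n * #E := by simp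
      _ ≤ (K * #A) ^ n * #E := by gcongr
      _ = K ^ n * #E * #A ^ n := by ring
      _ ≤ K ^ n * #E * (2 * #L) := by gcongr
      _ = 2 * K ^ n * (#E * #L) := by ring
      _ ≤ _ := by rw [← mul_sum]; gcongr
  obtain ⟨b, -, hb⟩ := exists_le_of_sum_le hΩ₀ average
  exact ⟨b, hb⟩

lemma card_filter_lt_abs_reflDensity_sub_le (A S Ω : Finset G) (δ : ℝ) (b : Fin n → G)
    (e e' : G) :
    #{x ∈ Ω | x + (e - e') ∈ Ω ∧ 2 * δ < |reflDensity A S (x + (e - e')) - reflDensity A S x|} ≤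
      #(sampleErrors A S Ω δ fun i ↦ b i - e) + #(sampleErrors A S Ω δ fun i ↦ b i - e') := by
  have subset : ({x ∈ Ω | x + (e - e') ∈ Ω ∧
      2 * δ < |reflDensity A S (x + (e - e')) - reflDensity A S x|} : Finset G) ⊆
      sampleErrors A S Ω δ (fun i ↦ b i - e) ∪
        (sampleErrors A S Ω δ fun i ↦ b i - e').image (· - (e - e')) := by
    intro x hx
    obtain ⟨hxΩ, hx'Ω, hlt⟩ := mem_filter.1 hx
    by_contra hnot
    rw [mem_union, not_or] at hnot
    have near : |sampleDensity S (fun i ↦ b i - e) x - reflDensity A S x| ≤ δ :=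
      le_of_not_gt fun h ↦ hnot.1 (mem_filter.2 ⟨hxΩ, h⟩)
    have near' : |sampleDensity S (fun i ↦ b i - e') (x + (e - e')) -
        reflDensity A S (x + (e - e'))| ≤ δ :=
      le_of_not_gt fun h ↦ hnot.2
        (mem_image.2 ⟨x + (e - e'), mem_filter.2 ⟨hx'Ω, h⟩, add_sub_cancel_right _ _⟩)
    rw [← sampleDensity_sub_const, abs_sub_comm] at near'
    linarith [abs_sub_le (reflDensity A S (x + (e - e')))
      (sampleDensity S (fun i ↦ b i - e) x) (reflDensity A S x)]
  exact (card_le_card subset).trans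
    ((card_union_le _ _).trans (Nat.add_le_add_left card_image_le _))

/-- `t` is an almost-period on `Ω` of the convolution of `A` and `S`, in measure: shifting by `t`
changes `reflDensity A S` by at most `2 * δ` outside a set of at most `2 * δ * #A` points. -/
def IsAlmostPeriod (A S Ω : Finset G) (δ : ℝ) (t : G) : Prop :=
  #{x ∈ Ω | x + t ∈ Ω ∧ 2 * δ < |reflDensity A S (x + t) - reflDensity A S x|} ≤ 2 * δ * #A

-- Croot–Sisask: if the shifts of a sample `b` by `e` and `e'` both approximate `reflDensity A S`,
-- then `e - e'` is an almost-period; pigeonholing over `b` finds one with many such `e`.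
lemma exists_almostPeriods (hA : A.Nonempty) (hE : A + E ⊆ Ω) (S : Finset G)
    (hΩ : #Ω ≤ K * #A) (hK : 0 < K) (hδ : 0 < δ) (hδ₁ : δ ≤ 1) (hn : 0 < n)
    (hexp : 2 * Real.exp (-(δ ^ 2 * n / 4)) ≤ δ / (2 * K)) :
    ∃ X ⊆ E, #E ≤ 2 * K ^ n * #X ∧ ∀ e ∈ X, ∀ e' ∈ X, IsAlmostPeriod A S Ω δ (e - e') := by
  obtain ⟨b, hb⟩ := exists_card_le_mul_card_filter_sub_mem hA
    (filter_subset (fun a ↦ #(sampleErrors A S Ω δ a) ≤ δ * #A) _)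
    (card_pow_le_two_mul_card_filter_card_sampleErrors_le hA hΩ hK hδ hδ₁ hn hexp) hE hΩ hK
  refine ⟨_, filter_subset _ _, hb, fun e he e' he' ↦ ?_⟩
  have few := (mem_filter.1 (mem_filter.1 he).2).2
  have few' := (mem_filter.1 (mem_filter.1 he').2).2
  calc _ ≤ (#(sampleErrors A S Ω δ fun i ↦ b i - e) : ℝ) +
          #(sampleErrors A S Ω δ fun i ↦ b i - e') := by
        exact_mod_cast card_filter_lt_abs_reflDensity_sub_le A S Ω δ b e e'
    _ ≤ 2 * δ * #A := by linarith

end AlmostPeriods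

/-! ### Large spectra and Riesz products -/

section CharacterSums

variable {G : Type*} [AddCommGroup G]

lemma addChar_map_sum {ι : Type*} (χ : AddChar G ℂ) (s : Finset ι) (f : ι → G) :
    χ (∑ i ∈ s, f i) = ∏ i ∈ s, χ (f i) := by
  classical
  induction s using Finset.induction_on with
  | empty => simp
  | insert i s hi ih => rw [sum_insert hi, prod_insert hi, AddChar.map_add_eq_mul, ih]

lemma sum_piFinset_addChar (E : Finset G) (χ : AddChar G ℂ) (k : ℕ) :
    ∑ f ∈ Fintype.piFinset (fun _ : Fin k ↦ E), χ (∑ i, f i) = (∑ x ∈ E, χ x) ^ k := by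
  simp only [addChar_map_sum, sum_pow']

variable [Finite G]

lemma norm_sum_addChar_le (E : Finset G) (χ : AddChar G ℂ) : ‖∑ x ∈ E, χ x‖ ≤ #E :=
  (norm_sum_le _ _).trans (by simp [AddChar.norm_apply])

lemma norm_mul_apply_sub_one_le (χ ψ : AddChar G ℂ) (y : G) :
    ‖(χ * ψ) y - 1‖ ≤ ‖χ y - 1‖ + ‖ψ y - 1‖ := by
  have split : (χ * ψ) y - 1 = (χ y - 1) + χ y * (ψ y - 1) := by
    rw [AddChar.mul_apply]
    ring
  rw [split]
  refine (norm_add_le _ _).trans_eq ?_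
  rw [norm_mul, AddChar.norm_apply, one_mul]

lemma norm_prod_apply_sub_one_le {ι : Type*} (s : Finset ι) (l : ι → AddChar G ℂ) (y : G) :
    ‖(∏ i ∈ s, l i) y - 1‖ ≤ ∑ i ∈ s, ‖l i y - 1‖ := by
  classical
  induction s using Finset.induction_on with
  | empty => simp
  | insert i s hi ih =>
    rw [sum_insert hi, prod_insert hi]
    exact (norm_mul_apply_sub_one_le _ _ _).trans (by gcongr)

end CharacterSums

section Dissociated

variable {ι G : Type*} [Fintype ι] [AddCommGroup G]

/-- `γ` is in the large spectrum of `X`, at level one half. -/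
def InLargeSpectrum (X : Finset G) (γ : AddChar G ℂ) : Prop := (#X : ℝ) / 2 ≤ ‖∑ x ∈ X, γ x‖

/-- The character `∏ i, l i ^ ε i`, for exponents `ε i ∈ {-1, 0, 1}`. -/
noncomputable def signedProd (l : ι → AddChar G ℂ) (ε : ι → SignType) : AddChar G ℂ :=
  ∏ i, l i ^ (ε i : ℤ)

/-- The family `l` is dissociated relative to `E`: no nontrivial product `∏ i, l i ^ ε i` with
`ε i ∈ {-1, 0, 1}` is in the large spectrum of `E`. -/
def Dissociated (E : Finset G) (l : ι → AddChar G ℂ) : Prop :=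
  ∀ ε : ι → SignType, ε ≠ 0 → ¬ InLargeSpectrum E (signedProd l ε)

lemma signedProd_apply (l : ι → AddChar G ℂ) (ε : ι → SignType) (x : G) :
    signedProd l ε x = ∏ i, l i x ^ (ε i : ℤ) := by
  simp [signedProd, AddChar.prod_apply, AddChar.zpow_apply]

lemma signedProd_neg (l : ι → AddChar G ℂ) (ε : ι → SignType) :
    signedProd l (-ε) = (signedProd l ε)⁻¹ := by
  simp [signedProd, SignType.coe_neg]

lemma signedProd_snoc {r : ℕ} (l : Fin r → AddChar G ℂ) (γ : AddChar G ℂ)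
    (ε : Fin (r + 1) → SignType) :
    signedProd (Fin.snoc l γ : Fin (r + 1) → AddChar G ℂ) ε =
      signedProd l (fun i ↦ ε i.castSucc) * γ ^ (ε (Fin.last r) : ℤ) := by
  simp [signedProd, Fin.prod_univ_castSucc]

variable [Finite G] {E : Finset G}

lemma inLargeSpectrum_inv {γ : AddChar G ℂ} : InLargeSpectrum E γ⁻¹ ↔ InLargeSpectrum E γ := by
  simp only [InLargeSpectrum, AddChar.inv_apply, AddChar.map_neg_eq_conj, ← map_sum,
    RCLike.norm_conj]

lemma norm_zpow_sign_apply_sub_one_le (χ : AddChar G ℂ) (s : SignType) (y : G) :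
    ‖(χ ^ (s : ℤ)) y - 1‖ ≤ ‖χ y - 1‖ := by
  cases s
  · simp
  · simp [norm_map_neg_sub_one]
  · simp

lemma norm_signedProd_apply_sub_one_le (l : ι → AddChar G ℂ) (ε : ι → SignType) (y : G) :
    ‖signedProd l ε y - 1‖ ≤ ∑ i, ‖l i y - 1‖ :=
  (norm_prod_apply_sub_one_le _ _ _).trans
    (sum_le_sum fun i _ ↦ norm_zpow_sign_apply_sub_one_le (l i) (ε i) y)

lemma norm_apply_sub_one_le_of_mul_signedProd {l : ι → AddChar G ℂ} {ε : ι → SignType}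
    {γ : AddChar G ℂ} {y : G} {η η' : ℝ} (hγ : ‖(γ * signedProd l ε) y - 1‖ ≤ η)
    (hl : ∀ i, ‖l i y - 1‖ ≤ η') : ‖γ y - 1‖ ≤ η + Fintype.card ι * η' := by
  calc ‖γ y - 1‖ = ‖(γ * signedProd l ε * signedProd l (-ε)) y - 1‖ := by
        rw [signedProd_neg, mul_inv_cancel_right]
    _ ≤ ‖(γ * signedProd l ε) y - 1‖ + ∑ i, ‖l i y - 1‖ :=
        (norm_mul_apply_sub_one_le _ _ y).trans
          (add_le_add_right (norm_signedProd_apply_sub_one_le l (-ε) y) _)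
    _ ≤ η + ∑ _i : ι, η' := add_le_add hγ (sum_le_sum fun i _ ↦ hl i)
    _ = η + Fintype.card ι * η' := by simp

lemma Dissociated.snoc {r : ℕ} {l : Fin r → AddChar G ℂ} (hl : Dissociated E l)
    {γ : AddChar G ℂ} (hγ : ∀ ε, ¬ InLargeSpectrum E (γ * signedProd l ε)) :
    Dissociated E (Fin.snoc l γ : Fin (r + 1) → AddChar G ℂ) := by
  intro ε hε
  rw [signedProd_snoc]
  match h : ε (Fin.last r) with
  | 0 =>
    rw [SignType.coe_zero, zpow_zero, mul_one]
    refine hl _ fun castSucc_eq ↦ hε ?_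
    exact funext (Fin.lastCases h (congrFun castSucc_eq))
  | 1 =>
    rw [SignType.coe_one, zpow_one, mul_comm]
    exact hγ _
  | -1 =>
    rw [SignType.coe_neg_one, zpow_neg_one, ← inLargeSpectrum_inv, mul_inv, inv_inv, mul_comm,
      ← signedProd_neg]
    exact hγ _

end Dissociated

section RieszCoeff

/-- The Fourier coefficients of `z ↦ cosh (1/2) + (ω * z).re * sinh (1/2)` on the unit circle. -/
noncomputable def rieszCoeff (ω : ℂ) : SignType → ℂ
  | 0 => (Real.cosh (1 / 2) : ℂ)
  | 1 => (Real.sinh (1 / 2) : ℂ) / 2 * ω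
  | -1 => (Real.sinh (1 / 2) : ℂ) / 2 * starRingEnd ℂ ω

lemma sum_rieszCoeff_mul_zpow (ω : ℂ) {z : ℂ} (hz : ‖z‖ = 1) :
    ∑ s : SignType, rieszCoeff ω s * z ^ (s : ℤ) =
      ((Real.cosh (1 / 2) + (ω * z).re * Real.sinh (1 / 2) : ℝ) : ℂ) := by
  have sum_eq : ∑ s : SignType, rieszCoeff ω s * z ^ (s : ℤ) =
      (Real.cosh (1 / 2) : ℂ) + ((Real.sinh (1 / 2) : ℂ) / 2 * starRingEnd ℂ ω * z⁻¹ +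
        (Real.sinh (1 / 2) : ℂ) / 2 * ω * z) := by
    simp [SignType.univ_eq, rieszCoeff]
  rw [sum_eq, Complex.inv_eq_conj hz, Complex.ofReal_add, Complex.ofReal_mul,
    Complex.re_eq_add_conj, map_mul]
  ring

lemma sum_norm_rieszCoeff {ω : ℂ} (hω : ‖ω‖ = 1) :
    ∑ s : SignType, ‖rieszCoeff ω s‖ = Real.exp (1 / 2) := by
  have hsinh : 0 < Real.sinh (1 / 2) := Real.sinh_pos_iff.2 (by norm_num)
  have sum_eq : ∑ s : SignType, ‖rieszCoeff ω s‖ = ‖(Real.cosh (1 / 2) : ℂ)‖ +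
      (‖(Real.sinh (1 / 2) : ℂ) / 2 * starRingEnd ℂ ω‖ + ‖(Real.sinh (1 / 2) : ℂ) / 2 * ω‖) := by
    simp [SignType.univ_eq, rieszCoeff]
  rw [sum_eq, norm_mul, norm_mul, RCLike.norm_conj, hω, norm_div, Complex.norm_real,
    Complex.norm_real, Real.norm_of_nonneg hsinh.le, Real.norm_of_nonneg (Real.cosh_pos _).le,
    RCLike.norm_ofNat, ← Real.cosh_add_sinh]
  ring

lemma norm_rieszCoeff_zero (ω : ℂ) : ‖rieszCoeff ω 0‖ = Real.cosh (1 / 2) := by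
  simp only [rieszCoeff]
  rw [Complex.norm_real, Real.norm_of_nonneg (Real.cosh_pos _).le]

lemma cosh_half_pow_add_half_pow_mul_exp_half_pow_le {r k : ℕ} (hrk : r ≤ k) :
    Real.cosh (1 / 2) ^ r + (1 / 2) ^ k * Real.exp (1 / 2) ^ r ≤ 2 * Real.exp (r / 8) := by
  have cosh_pow_le : Real.cosh (1 / 2) ^ r ≤ Real.exp (r / 8) :=
    calc Real.cosh (1 / 2) ^ r ≤ Real.exp ((1 / 2) ^ 2 / 2) ^ r := by
          gcongr
          exact Real.cosh_le_exp_half_sq _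
      _ = Real.exp (r / 8) := by
          rw [← Real.exp_nat_mul]
          congr 1
          ring
  have exp_half_le : Real.exp (1 / 2) ≤ 2 := by
    refine le_of_sq_le_sq ?_ (by norm_num)
    rw [← Real.exp_nat_mul]
    norm_num
    linarith [Real.exp_one_lt_d9]
  have rest_le : (1 / 2 : ℝ) ^ k * Real.exp (1 / 2) ^ r ≤ 1 :=
    calc (1 / 2 : ℝ) ^ k * Real.exp (1 / 2) ^ r ≤ (1 / 2) ^ r * 2 ^ r := by
          gcongr ?_ * ?_ ^ _
          exact pow_le_pow_of_le_one (by norm_num) (by norm_num) hrk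
      _ = 1 := by rw [← mul_pow]; norm_num
  linarith [Real.one_le_exp (show (0 : ℝ) ≤ r / 8 by positivity)]

end RieszCoeff

section RieszProduct

variable {ι G : Type*} [Fintype ι] [AddCommGroup G] {l : ι → AddChar G ℂ}
  {ω : ι → ℂ} {E F X : Finset G} {M : ℝ} {k : ℕ}

/-- A nonnegative product of characters and their conjugates, large where all of the `ω i * l i x`
are close to `1`; the weights `cosh` and `sinh` make it dominate an exponential. -/
noncomputable def rieszProduct (l : ι → AddChar G ℂ) (ω : ι → ℂ) (x : G) : ℝ :=
  ∏ i, (Real.cosh (1 / 2) + (ω i * l i x).re * Real.sinh (1 / 2))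

variable [Finite G]

lemma exp_sum_re_le_rieszProduct (hω : ∀ i, ‖ω i‖ = 1) (x : G) :
    Real.exp (∑ i, (ω i * l i x).re * (1 / 2)) ≤ rieszProduct l ω x := by
  rw [Real.exp_sum]
  refine prod_le_prod (fun _ _ ↦ (Real.exp_pos _).le) fun i _ ↦ ?_
  refine Real.exp_mul_le_cosh_add_mul_sinh ((Complex.abs_re_le_norm _).trans_eq ?_) _
  rw [norm_mul, hω, AddChar.norm_apply, one_mul]

lemma rieszProduct_nonneg (hω : ∀ i, ‖ω i‖ = 1) (x : G) : 0 ≤ rieszProduct l ω x :=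
  (Real.exp_pos _).le.trans (exp_sum_re_le_rieszProduct hω x)

lemma card_mul_exp_le_sum_rieszProduct (hω : ∀ i, ‖ω i‖ = 1)
    (hX : ∀ i, (#X : ℝ) / 2 ≤ (ω i * ∑ x ∈ X, l i x).re) :
    #X * Real.exp (Fintype.card ι / 4) ≤ ∑ x ∈ X, rieszProduct l ω x := by
  set r : ℝ := ((Fintype.card ι : ℕ) : ℝ) with hr
  have tangent_le (x) (_ : x ∈ X) :
      Real.exp (r / 4) * (∑ i, (ω i * l i x).re * (1 / 2) - r / 4 + 1) ≤ rieszProduct l ω x := by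
    refine le_trans ?_ (exp_sum_re_le_rieszProduct hω x)
    rw [show ∑ i, (ω i * l i x).re * (1 / 2) =
      r / 4 + (∑ i, (ω i * l i x).re * (1 / 2) - r / 4) by ring, Real.exp_add, add_sub_cancel_left]
    gcongr
    exact Real.add_one_le_exp _
  have exponent_average : r / 4 * #X ≤ ∑ x ∈ X, ∑ i, (ω i * l i x).re * (1 / 2) := by
    rw [sum_comm]
    calc r / 4 * #X = ∑ _i : ι, (#X : ℝ) / 4 := by simp [hr]; ring
      _ ≤ _ := sum_le_sum fun i _ ↦ by
          rw [← sum_mul, ← Complex.re_sum, ← mul_sum]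
          linarith [hX i]
  refine le_trans ?_ (sum_le_sum tangent_le)
  rw [← mul_sum, sum_add_distrib, sum_sub_distrib, mul_comm]
  gcongr
  simp only [sum_const, nsmul_eq_mul, mul_one]
  linarith

lemma card_pow_mul_sum_rieszProduct_le (hω : ∀ i, ‖ω i‖ = 1)
    (hF : ∀ x ∈ X, ∀ f : Fin k → G, (∀ i, f i ∈ E) → x - ∑ i, f i ∈ F) :
    (#E : ℝ) ^ k * ∑ x ∈ X, rieszProduct l ω x ≤
      ∑ f ∈ Fintype.piFinset (fun _ : Fin k ↦ E), ∑ e ∈ F, rieszProduct l ω (e + ∑ i, f i) := by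
  classical
  have card_tuples : (#E : ℝ) ^ k = #(Fintype.piFinset fun _ : Fin k ↦ E) := by simp
  rw [card_tuples, ← nsmul_eq_mul]
  refine card_nsmul_le_sum _ _ _ fun f hf ↦ ?_
  calc ∑ x ∈ X, rieszProduct l ω x
      = ∑ e ∈ X.image (· - ∑ i, f i), rieszProduct l ω (e + ∑ i, f i) := by
        rw [sum_image sub_left_injective.injOn]
        simp
    _ ≤ ∑ e ∈ F, rieszProduct l ω (e + ∑ i, f i) := by
        refine sum_le_sum_of_subset_of_nonneg ?_ fun _ _ _ ↦ rieszProduct_nonneg hω _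
        exact image_subset_iff.2 fun x hx ↦ hF x hx f (Fintype.mem_piFinset.1 hf)

lemma rieszProduct_eq_sum [DecidableEq ι] (l : ι → AddChar G ℂ) (ω : ι → ℂ) (x : G) :
    (rieszProduct l ω x : ℂ) =
      ∑ ε : ι → SignType, (∏ i, rieszCoeff (ω i) (ε i)) * signedProd l ε x := by
  rw [rieszProduct, Complex.ofReal_prod]
  simp_rw [← sum_rieszCoeff_mul_zpow _ (AddChar.norm_apply _ x), Fintype.prod_sum, signedProd_apply,
    prod_mul_distrib]

lemma sum_sum_rieszProduct_eq [DecidableEq ι] (l : ι → AddChar G ℂ) (ω : ι → ℂ)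
    (E F : Finset G) (k : ℕ) :
    ((∑ f ∈ Fintype.piFinset (fun _ : Fin k ↦ E),
        ∑ e ∈ F, rieszProduct l ω (e + ∑ i, f i) : ℝ) : ℂ) =
      ∑ ε : ι → SignType, (∏ i, rieszCoeff (ω i) (ε i)) *
        ((∑ e ∈ F, signedProd l ε e) * (∑ x ∈ E, signedProd l ε x) ^ k) := by
  push_cast
  simp_rw [rieszProduct_eq_sum, ← sum_piFinset_addChar, sum_mul_sum, mul_sum,
    AddChar.map_add_eq_mul]
  rw [sum_congr rfl fun f _ ↦ sum_comm, sum_comm]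
  exact sum_congr rfl fun ε _ ↦ sum_comm

lemma Dissociated.norm_term_le (hl : Dissociated E l) (ω : ι → ℂ) (F : Finset G) (k : ℕ)
    (ε : ι → SignType) :
    ‖(∏ i, rieszCoeff (ω i) (ε i)) *
        ((∑ e ∈ F, signedProd l ε e) * (∑ x ∈ E, signedProd l ε x) ^ k)‖ ≤
      #F * #E ^ k * ((if ε = 0 then Real.cosh (1 / 2) ^ Fintype.card ι else 0) +
        (1 / 2) ^ k * ∏ i, ‖rieszCoeff (ω i) (ε i)‖) := by
  have hprod : 0 ≤ ∏ i, ‖rieszCoeff (ω i) (ε i)‖ := prod_nonneg fun _ _ ↦ norm_nonneg _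
  rw [norm_mul, norm_mul, norm_pow, norm_prod]
  by_cases hε : ε = 0
  · have coeff_eq : ∏ i, ‖rieszCoeff (ω i) (ε i)‖ = Real.cosh (1 / 2) ^ Fintype.card ι := by
      simp [hε, norm_rieszCoeff_zero]
    rw [if_pos hε, mul_comm, ← coeff_eq]
    gcongr
    · exact norm_sum_addChar_le F _
    · exact norm_sum_addChar_le E _
    · exact le_add_of_nonneg_right (by positivity)
  · rw [if_neg hε, zero_add]
    calc _ ≤ (∏ i, ‖rieszCoeff (ω i) (ε i)‖) * (#F * ((#E : ℝ) / 2) ^ k) := by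
          gcongr
          · exact norm_sum_addChar_le F _
          · exact (not_le.1 (hl ε hε)).le
      _ = _ := by rw [div_pow, one_div, inv_pow]; field_simp

lemma Dissociated.sum_sum_rieszProduct_le (hl : Dissociated E l) (hω : ∀ i, ‖ω i‖ = 1)
    (F : Finset G) (hk : Fintype.card ι ≤ k) :
    ∑ f ∈ Fintype.piFinset (fun _ : Fin k ↦ E), ∑ e ∈ F, rieszProduct l ω (e + ∑ i, f i) ≤
      #F * #E ^ k * (2 * Real.exp (Fintype.card ι / 8)) := by
  classical
  have sum_norm_coeff : ∑ ε : ι → SignType, ∏ i, ‖rieszCoeff (ω i) (ε i)‖ =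
      Real.exp (1 / 2) ^ Fintype.card ι := by
    simpa [sum_norm_rieszCoeff (hω _)] using
      (Fintype.prod_sum fun i s ↦ ‖rieszCoeff (ω i) s‖).symm
  calc _ ≤ ‖((∑ f ∈ Fintype.piFinset (fun _ : Fin k ↦ E),
        ∑ e ∈ F, rieszProduct l ω (e + ∑ i, f i) : ℝ) : ℂ)‖ := by
        rw [Complex.norm_real]
        exact le_abs_self _
    _ ≤ #F * #E ^ k * (Real.cosh (1 / 2) ^ Fintype.card ι +
          (1 / 2) ^ k * Real.exp (1 / 2) ^ Fintype.card ι) := by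
        rw [sum_sum_rieszProduct_eq]
        refine (norm_sum_le_of_le _ fun ε _ ↦ hl.norm_term_le ω F k ε).trans_eq ?_
        rw [← mul_sum, sum_add_distrib, ← mul_sum, sum_norm_coeff, sum_ite_eq' univ 0,
          if_pos (mem_univ _)]
    _ ≤ _ := by
        gcongr
        exact cosh_half_pow_add_half_pow_mul_exp_half_pow_le hk

end RieszProduct

section Chang

variable {G : Type*} [AddCommGroup G] [Finite G] {E F X : Finset G} {M : ℝ} {k : ℕ}

lemma Dissociated.exp_card_div_eight_le {ι : Type*} [Fintype ι] {l : ι → AddChar G ℂ}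
    (hl : Dissociated E l) (hX : X.Nonempty) (hE : E.Nonempty)
    (hF : ∀ x ∈ X, ∀ f : Fin k → G, (∀ i, f i ∈ E) → x - ∑ i, f i ∈ F) (hM : #F ≤ M * #X)
    (hlX : ∀ i, InLargeSpectrum X (l i)) (hk : Fintype.card ι ≤ k) :
    Real.exp (Fintype.card ι / 8) ≤ 2 * M := by
  choose ω hω hωX using fun i ↦ Complex.exists_norm_eq_mul_self (∑ x ∈ X, l i x)
  set r : ℝ := ((Fintype.card ι : ℕ) : ℝ)
  have lower : #X * Real.exp (r / 4) ≤ ∑ x ∈ X, rieszProduct l ω x :=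
    card_mul_exp_le_sum_rieszProduct hω fun i ↦ by
      rw [← hωX i, Complex.ofReal_re]
      exact hlX i
  have bounds : (#E : ℝ) ^ k * (#X * Real.exp (r / 4)) ≤
      (M * #X) * #E ^ k * (2 * Real.exp (r / 8)) :=
    calc _ ≤ (#E : ℝ) ^ k * ∑ x ∈ X, rieszProduct l ω x := by gcongr
      _ ≤ #F * #E ^ k * (2 * Real.exp (r / 8)) :=
        (card_pow_mul_sum_rieszProduct_le hω hF).trans (hl.sum_sum_rieszProduct_le hω F hk)
      _ ≤ _ := by gcongr
  rw [show r / 4 = r / 8 + r / 8 by ring, Real.exp_add] at bounds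
  refine le_of_mul_le_mul_right ?_
    (by positivity : 0 < (#E : ℝ) ^ k * #X * Real.exp (r / 8))
  linarith

-- Chang's lemma relative to `E`: a maximal dissociated family in the large spectrum of `X`.
lemma exists_dissociated_span (R : ℕ) (hX : X.Nonempty) (hE : E.Nonempty)
    (hF : ∀ x ∈ X, ∀ f : Fin R → G, (∀ i, f i ∈ E) → x - ∑ i, f i ∈ F)
    (hM : #F ≤ M * #X) (hR : 2 * M < Real.exp (R / 8)) :
    ∃ r ≤ R, ∃ l : Fin r → AddChar G ℂ, ∀ γ, InLargeSpectrum X γ →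
      ∃ ε, InLargeSpectrum E (γ * signedProd l ε) := by
  classical
  let Admissible (r : ℕ) : Prop :=
    ∃ l : Fin r → AddChar G ℂ, Dissociated E l ∧ ∀ i, InLargeSpectrum X (l i)
  have admissible_zero : Admissible 0 :=
    ⟨Fin.elim0, fun ε hε ↦ absurd (Subsingleton.elim ε 0) hε, fun i ↦ i.elim0⟩
  have hrR : Nat.findGreatest Admissible R ≤ R := Nat.findGreatest_le R
  obtain ⟨l, hl, hlX⟩ := Nat.findGreatest_spec (Nat.zero_le R) admissible_zero
  refine ⟨_, hrR, l, fun γ hγ ↦ by_contra fun hno ↦ ?_⟩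
  have hrlt : Nat.findGreatest Admissible R < R := by
    refine hrR.lt_of_ne fun hr ↦ hR.not_ge ?_
    simpa [hr] using hl.exp_card_div_eight_le hX hE hF hM hlX (by simpa using hrR)
  refine Nat.findGreatest_is_greatest (Nat.lt_succ_self _) hrlt
    ⟨Fin.snoc l γ, hl.snoc (not_exists.1 hno), fun i ↦ ?_⟩
  refine Fin.lastCases ?_ (fun j ↦ ?_) i
  · simpa using hγ
  · simpa using hlX j

end Chang

section LargeSpectrumOfAlmostInvariant

variable {G : Type*} [AddCommGroup G] [DecidableEq G] {E V : Finset G} {η : ℝ}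

lemma map_sub_one_mul_sum_eq (E : Finset G) (χ : AddChar G ℂ) (y : G) :
    (χ y - 1) * ∑ x ∈ E, χ x =
      ∑ x ∈ E with x + y ∉ E, χ (x + y) - ∑ x ∈ E with x + -y ∉ E, χ x := by
  have shift : ∑ x ∈ E with x + y ∈ E, χ (x + y) = ∑ x ∈ E with x + -y ∈ E, χ x := by
    refine sum_nbij' (· + y) (· + -y) ?_ ?_ ?_ ?_ ?_ <;> simp +contextual
  have expand : (χ y - 1) * ∑ x ∈ E, χ x = ∑ x ∈ E, χ (x + y) - ∑ x ∈ E, χ x := by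
    simp only [sub_mul, one_mul, mul_sum, AddChar.map_add_eq_mul, mul_comm (χ y), sum_sub_distrib]
  rw [expand, ← sum_filter_add_sum_filter_not E (fun x ↦ x + y ∈ E) (fun x ↦ χ (x + y)),
    ← sum_filter_add_sum_filter_not E (fun x ↦ x + -y ∈ E) χ, shift, add_sub_add_left_eq_sub]

lemma AlmostInvariant.norm_map_sub_one_le [Finite G] (h : AlmostInvariant E V η) (h0 : 0 ∈ V)
    (hE : E.Nonempty) {χ : AddChar G ℂ} (hχ : InLargeSpectrum E χ) {y : G} (hy : y ∈ V)
    (hy' : -y ∈ V) : ‖χ y - 1‖ ≤ 4 * η := by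
  have hE₀ : (0 : ℝ) < #E := by exact_mod_cast hE.card_pos
  have upper : ‖χ y - 1‖ * ‖∑ x ∈ E, χ x‖ ≤ η * #E + η * #E := by
    rw [← norm_mul, map_sub_one_mul_sum_eq]
    refine (norm_sub_le _ _).trans (add_le_add ?_ ?_)
    · refine (norm_sum_le _ _).trans (le_trans ?_ (h.card_filter_add_notMem_le h0 hy))
      simp [AddChar.norm_apply]
    · exact (norm_sum_addChar_le _ _).trans (h.card_filter_add_notMem_le h0 hy')
  have lower := mul_le_mul_of_nonneg_left hχ (norm_nonneg (χ y - 1))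
  refine le_of_mul_le_mul_right ?_ (half_pos hE₀)
  linarith

end LargeSpectrumOfAlmostInvariant

/-! ### Smoothed correlations -/

section SmoothedCorrelation

variable {G : Type*} [AddCommGroup G]

lemma ofReal_norm_sum_sq [Finite G] (S : Finset G) (γ : AddChar G ℂ) :
    ((‖∑ a ∈ S, γ a‖ ^ 2 : ℝ) : ℂ) = (∑ a ∈ S, γ a) * ∑ a ∈ S, γ (-a) := by
  simp only [AddChar.map_neg_eq_conj, ← map_sum, Complex.mul_conj, Complex.normSq_eq_norm_sq]

lemma ofReal_norm_sum_sq_pow [Finite G] (S : Finset G) (γ : AddChar G ℂ) (k : ℕ) :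
    (((‖∑ a ∈ S, γ a‖ ^ 2) ^ k : ℝ) : ℂ) =
      (∑ e ∈ Fintype.piFinset (fun _ : Fin k ↦ S), γ (∑ i, e i)) *
        ∑ e ∈ Fintype.piFinset (fun _ : Fin k ↦ S), γ (-∑ i, e i) := by
  rw [Complex.ofReal_pow, ofReal_norm_sum_sq, mul_pow, sum_piFinset_addChar]
  simp only [← AddChar.inv_apply, sum_piFinset_addChar]

lemma norm_sum_sq_mul_norm_sum_sq_pow_mul_map [Finite G] (A' X : Finset G) (k : ℕ) (y : G)
    (γ : AddChar G ℂ) :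
    ((‖∑ a ∈ A', γ a‖ ^ 2 * (‖∑ a ∈ X, γ a‖ ^ 2) ^ k : ℝ) : ℂ) * γ y =
      ∑ u ∈ A', ∑ v ∈ A', ∑ e ∈ Fintype.piFinset (fun _ : Fin k ↦ X),
        ∑ e' ∈ Fintype.piFinset (fun _ : Fin k ↦ X),
          γ (v - u + (∑ i, e i - ∑ i, e' i) + y) := by
  rw [Complex.ofReal_mul, ofReal_norm_sum_sq, ofReal_norm_sum_sq_pow, mul_comm (∑ a ∈ A', γ a),
    sum_mul_sum, sum_mul_sum, sum_mul, sum_mul]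
  refine sum_congr rfl fun u _ ↦ ?_
  rw [sum_mul, sum_mul]
  refine sum_congr rfl fun v _ ↦ ?_
  rw [mul_sum, sum_mul]
  refine sum_congr rfl fun e _ ↦ ?_
  rw [mul_sum, sum_mul]
  refine sum_congr rfl fun e' _ ↦ ?_
  simp only [← AddChar.map_add_eq_mul]
  congr 1
  abel

variable {X : Finset G} {y : G} {η : ℝ}

lemma norm_sum_sq_mul_norm_sum_sq_pow_mul_le [Finite G] (A' : Finset G) (k : ℕ) (hη : 0 ≤ η)
    (h : ∀ γ, InLargeSpectrum X γ → ‖γ y - 1‖ ≤ η) (γ : AddChar G ℂ) :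
    ‖∑ a ∈ A', γ a‖ ^ 2 * (‖∑ a ∈ X, γ a‖ ^ 2) ^ k * ‖γ y - 1‖ ≤
      (#A' : ℝ) ^ 2 * ((#X : ℝ) ^ 2) ^ k * (2 * (1 / 4) ^ k + η) := by
  have hA' := norm_sum_addChar_le A' γ
  have hX := norm_sum_addChar_le X γ
  by_cases hγ : InLargeSpectrum X γ
  · gcongr
    exact (h γ hγ).trans (le_add_of_nonneg_left (by positivity))
  · have small : ‖∑ a ∈ X, γ a‖ ≤ (#X : ℝ) / 2 := (not_le.1 hγ).le
    have dist_le : ‖γ y - 1‖ ≤ 2 := by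
      refine (norm_sub_le _ _).trans_eq ?_
      rw [AddChar.norm_apply, norm_one, one_add_one_eq_two]
    calc ‖∑ a ∈ A', γ a‖ ^ 2 * (‖∑ a ∈ X, γ a‖ ^ 2) ^ k * ‖γ y - 1‖
        ≤ (#A' : ℝ) ^ 2 * (((#X : ℝ) / 2) ^ 2) ^ k * 2 := by gcongr
      _ = (#A' : ℝ) ^ 2 * ((#X : ℝ) ^ 2) ^ k * (2 * (1 / 4) ^ k) := by
          rw [div_pow, div_pow, one_div, inv_pow]
          norm_num
          field_simp
      _ ≤ _ := by gcongr; exact le_add_of_nonneg_right hη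

variable [Fintype G]

lemma card_mul_corr_ind_eq_sum [DecidableEq G] (A : Finset G) (t : G) :
    (Fintype.card G : ℂ) * (corr (ind A) (ind A) t : ℝ) =
      ∑ γ : AddChar G ℂ, ((‖∑ a ∈ A, γ a‖ ^ 2 : ℝ) : ℂ) * γ t := by
  have expand (γ : AddChar G ℂ) : ((‖∑ a ∈ A, γ a‖ ^ 2 : ℝ) : ℂ) * γ t =
      ∑ a ∈ A, ∑ a' ∈ A, γ (a + t - a') := by
    rw [ofReal_norm_sum_sq, sum_mul_sum]
    simp only [sum_mul, ← AddChar.map_add_eq_mul]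
    exact sum_congr rfl fun a _ ↦ sum_congr rfl fun a' _ ↦ by congr 1; abel
  simp_rw [expand]
  rw [sum_comm, corr_ind]
  push_cast
  rw [mul_sum]
  refine sum_congr rfl fun a _ ↦ ?_
  rw [sum_comm]
  simp only [AddChar.sum_apply_eq_ite, sub_eq_zero, sum_ite_eq, ind]
  split_ifs <;> simp

lemma sum_norm_sum_addChar_sq (A : Finset G) :
    ∑ γ : AddChar G ℂ, ‖∑ a ∈ A, γ a‖ ^ 2 = Fintype.card G * #A := by
  classical
  have := card_mul_corr_ind_eq_sum A 0
  simp only [corr_ind_zero, AddChar.map_zero_eq_one, mul_one] at this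
  exact_mod_cast this.symm

variable [DecidableEq G]

/-- The autocorrelation of `A`, convolved with the autocorrelations of `A'` and of the `k`-fold
convolution of `X` (unnormalised). -/
noncomputable def smoothedCorr (A A' X : Finset G) (k : ℕ) (y : G) : ℝ :=
  ∑ u ∈ A', ∑ v ∈ A', ∑ e ∈ Fintype.piFinset (fun _ : Fin k ↦ X),
    ∑ e' ∈ Fintype.piFinset (fun _ : Fin k ↦ X),
      corr (ind A) (ind A) (v - u + (∑ i, e i - ∑ i, e' i) + y)

lemma card_mul_smoothedCorr_eq_sum (A A' X : Finset G) (k : ℕ) (y : G) :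
    (Fintype.card G : ℂ) * (smoothedCorr A A' X k y : ℝ) =
      ∑ γ : AddChar G ℂ, ((‖∑ a ∈ A, γ a‖ ^ 2 *
        (‖∑ a ∈ A', γ a‖ ^ 2 * (‖∑ a ∈ X, γ a‖ ^ 2) ^ k) : ℝ) : ℂ) * γ y := by
  simp_rw [Complex.ofReal_mul (‖∑ _a ∈ A, _‖ ^ 2), mul_assoc,
    norm_sum_sq_mul_norm_sum_sq_pow_mul_map, smoothedCorr, Complex.ofReal_sum, mul_sum,
    card_mul_corr_ind_eq_sum]
  symm
  rw [sum_comm]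
  refine sum_congr rfl fun u _ ↦ ?_
  rw [sum_comm]
  refine sum_congr rfl fun v _ ↦ ?_
  rw [sum_comm]
  exact sum_congr rfl fun e _ ↦ sum_comm

lemma abs_smoothedCorr_sub_le (A A' : Finset G) (k : ℕ) (hη : 0 ≤ η)
    (h : ∀ γ, InLargeSpectrum X γ → ‖γ y - 1‖ ≤ η) :
    |smoothedCorr A A' X k y - smoothedCorr A A' X k 0| ≤
      #A * ((#A' : ℝ) ^ 2 * ((#X : ℝ) ^ 2) ^ k) * (2 * (1 / 4) ^ k + η) := by
  have hG : (0 : ℝ) < Fintype.card G := by exact_mod_cast Fintype.card_pos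
  have fourier : (Fintype.card G : ℂ) * ((smoothedCorr A A' X k y - smoothedCorr A A' X k 0 : ℝ)) =
      ∑ γ : AddChar G ℂ, ((‖∑ a ∈ A, γ a‖ ^ 2 *
        (‖∑ a ∈ A', γ a‖ ^ 2 * (‖∑ a ∈ X, γ a‖ ^ 2) ^ k) : ℝ) : ℂ) * (γ y - 1) := by
    rw [Complex.ofReal_sub, mul_sub, card_mul_smoothedCorr_eq_sum, card_mul_smoothedCorr_eq_sum,
      ← sum_sub_distrib]
    simp only [AddChar.map_zero_eq_one, mul_sub]
  have term_le (γ : AddChar G ℂ) : ‖((‖∑ a ∈ A, γ a‖ ^ 2 *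
      (‖∑ a ∈ A', γ a‖ ^ 2 * (‖∑ a ∈ X, γ a‖ ^ 2) ^ k) : ℝ) : ℂ) * (γ y - 1)‖ ≤
      ‖∑ a ∈ A, γ a‖ ^ 2 *
        ((#A' : ℝ) ^ 2 * ((#X : ℝ) ^ 2) ^ k * (2 * (1 / 4) ^ k + η)) := by
    rw [norm_mul, Complex.norm_real, Real.norm_of_nonneg (by positivity), mul_assoc]
    exact mul_le_mul_of_nonneg_left
      (norm_sum_sq_mul_norm_sum_sq_pow_mul_le A' k hη h γ) (by positivity)
  refine le_of_mul_le_mul_left ?_ hG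
  calc (Fintype.card G : ℝ) * |smoothedCorr A A' X k y - smoothedCorr A A' X k 0|
      = ‖(Fintype.card G : ℂ) * ((smoothedCorr A A' X k y - smoothedCorr A A' X k 0 : ℝ))‖ := by
        rw [norm_mul, Complex.norm_real, Real.norm_eq_abs, Complex.norm_natCast]
    _ ≤ ∑ γ : AddChar G ℂ, ‖∑ a ∈ A, γ a‖ ^ 2 *
          ((#A' : ℝ) ^ 2 * ((#X : ℝ) ^ 2) ^ k * (2 * (1 / 4) ^ k + η)) := by
        rw [fourier]
        exact norm_sum_le_of_le _ fun γ _ ↦ term_le γ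
    _ = _ := by
        rw [← sum_mul, sum_norm_sum_addChar_sq]
        ring

end SmoothedCorrelation

/-! ### Sifting -/

section Sifting

variable {G : Type*} [AddCommGroup G] [DecidableEq G]

/-- The elements of `D` which translate every entry of the tuple `b` into `A`. Sifting replaces `D`
by such a set, for a random tuple `b`. -/
def commonTranslates (A D : Finset G) {m : ℕ} (b : Fin m → G) : Finset G :=
  {u ∈ D | ∀ i, b i + u ∈ A}

lemma prod_ind_add (A : Finset G) {m : ℕ} (b : Fin m → G) (u : G) :
    ∏ i, ind A (b i + u) = if ∀ i, b i + u ∈ A then 1 else 0 := by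
  simp [ind, prod_ite_zero]

lemma sum_commonTranslates (A D : Finset G) {m : ℕ} (b : Fin m → G) (F : G → ℝ) :
    ∑ u ∈ commonTranslates A D b, F u = ∑ u ∈ D, (∏ i, ind A (b i + u)) * F u := by
  simp [commonTranslates, sum_filter, prod_ind_add]

variable [Fintype G]

lemma sum_card_commonTranslates (A D : Finset G) (m : ℕ) :
    ∑ b : Fin m → G, (#(commonTranslates A D b) : ℝ) = #D * (#A : ℝ) ^ m := by
  have sum_prod (u : G) : ∑ b : Fin m → G, ∏ i, ind A (b i + u) = (#A : ℝ) ^ m := by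
    rw [← sum_ind, ← Equiv.sum_comp (Equiv.addRight u), Fintype.sum_pow]
    rfl
  have card_eq (b : Fin m → G) :
      (#(commonTranslates A D b) : ℝ) = ∑ u ∈ D, ∏ i, ind A (b i + u) := by
    simpa using sum_commonTranslates A D b 1
  simp_rw [card_eq]
  rw [sum_comm]
  simp [sum_prod]

lemma sum_sum_sum_commonTranslates (A D : Finset G) (m : ℕ) (F : G → G → ℝ) :
    ∑ b : Fin m → G, ∑ u ∈ commonTranslates A D b, ∑ v ∈ commonTranslates A D b, F u v =
      ∑ u ∈ D, ∑ v ∈ D, corr (ind A) (ind A) (v - u) ^ m * F u v := by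
  have corr_pow (u v : G) : corr (ind A) (ind A) (v - u) ^ m =
      ∑ b : Fin m → G, (∏ i, ind A (b i + u)) * ∏ i, ind A (b i + v) := by
    simp_rw [corr_sub, Fintype.sum_pow, prod_mul_distrib]
  simp only [sum_commonTranslates, corr_pow, mul_sum, sum_mul, ← mul_assoc]
  rw [sum_comm]
  exact sum_congr rfl fun u _ ↦ sum_comm

lemma exists_subset_sum_sum_le_card_sq {A D : Finset G} {m : ℕ} {F : G → G → ℝ} {κ : ℝ}
    (hκ : 0 ≤ κ) (hF : ∀ u v, 0 ≤ F u v)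
    (h : κ * (#D * (#A : ℝ) ^ m) + ∑ u ∈ D, ∑ v ∈ D, corr (ind A) (ind A) (v - u) ^ m * F u v <
      ∑ u ∈ D, ∑ v ∈ D, corr (ind A) (ind A) (v - u) ^ m) :
    ∃ A' ⊆ D, κ < #A' ∧ ∑ u ∈ A', ∑ v ∈ A', F u v ≤ (#A' : ℝ) ^ 2 := by
  set T : (Fin m → G) → Finset G := fun b ↦ commonTranslates A D b
  have sum_card_sq : ∑ b, (#(T b) : ℝ) ^ 2 =
      ∑ u ∈ D, ∑ v ∈ D, corr (ind A) (ind A) (v - u) ^ m := by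
    simpa [sq] using sum_sum_sum_commonTranslates A D m 1
  have sum_lt : ∑ b, (κ * #(T b) + ∑ u ∈ T b, ∑ v ∈ T b, F u v) < ∑ b, (#(T b) : ℝ) ^ 2 := by
    rwa [sum_add_distrib, ← mul_sum, sum_card_commonTranslates, sum_sum_sum_commonTranslates,
      sum_card_sq]
  obtain ⟨b, -, hb⟩ := exists_lt_of_sum_lt sum_lt
  have F_nonneg : 0 ≤ ∑ u ∈ T b, ∑ v ∈ T b, F u v :=
    sum_nonneg fun u _ ↦ sum_nonneg fun v _ ↦ hF u v
  refine ⟨T b, filter_subset _ _, ?_, ?_⟩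
  · by_contra! hle
    nlinarith
  · nlinarith

lemma exists_subset_sum_corr_lt_le {A D : Finset G} {M α : ℝ} {m p : ℕ} (hA : A.Nonempty)
    (hD : D.Nonempty) (hα : 0 < α) (hM : M = α * #A) (hm : (1.01 : ℝ) ^ m ≤ 2 ^ p)
    (hp : 12 ≤ p)
    (h : 4 ^ p * M ^ m * (#D : ℝ) ^ 2 ≤ ∑ u ∈ D, ∑ v ∈ D, corr (ind A) (ind A) (v - u) ^ m) :
    ∃ A' ⊆ D, α ^ m / 4 * #D < #A' ∧
      1000 * ∑ u ∈ A', ∑ v ∈ A', (if corr (ind A) (ind A) (v - u) < 1.01 * M then (1 : ℝ) else 0)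
        ≤ (#A' : ℝ) ^ 2 := by
  have hM₀ : 0 < M := by rw [hM]; positivity
  have two_pow : (4000 : ℝ) ≤ 2 ^ p :=
    le_trans (by norm_num) (pow_le_pow_right₀ one_le_two hp)
  have four_pow : (4 : ℝ) ^ p = 2 ^ p * 2 ^ p := by rw [← mul_pow]; norm_num
  simp_rw [mul_sum]
  refine exists_subset_sum_sum_le_card_sq (m := m) (by positivity)
    (fun u v ↦ by positivity) (lt_of_lt_of_le ?_ h)
  have small_term (u v : G) : corr (ind A) (ind A) (v - u) ^ m *
      (1000 * if corr (ind A) (ind A) (v - u) < 1.01 * M then 1 else 0) ≤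
        1000 * (1.01 * M) ^ m := by
    split_ifs with hlt
    · have := pow_le_pow_left₀ (corr_ind_nonneg A A (v - u)) hlt.le m
      linarith
    · rw [mul_zero, mul_zero]
      positivity
  calc α ^ m / 4 * #D * (#D * (#A : ℝ) ^ m) + ∑ u ∈ D, ∑ v ∈ D, corr (ind A) (ind A) (v - u) ^ m *
        (1000 * if corr (ind A) (ind A) (v - u) < 1.01 * M then 1 else 0)
      ≤ α ^ m / 4 * #D * (#D * (#A : ℝ) ^ m) + ∑ _u ∈ D, ∑ _v ∈ D, 1000 * (1.01 * M) ^ m := by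
        exact add_le_add_right (sum_le_sum fun u _ ↦ sum_le_sum fun v _ ↦ small_term u v) _
    _ = (1 / 4 + 1000 * 1.01 ^ m) * (M ^ m * (#D : ℝ) ^ 2) := by
        simp only [sum_const, nsmul_eq_mul, hM]
        ring
    _ < (2 ^ p * 2 ^ p) * (M ^ m * (#D : ℝ) ^ 2) := by
        gcongr
        nlinarith
    _ = 4 ^ p * M ^ m * (#D : ℝ) ^ 2 := by rw [four_pow]; ring

end Sifting

/-! ### Unbalancing -/

section Unbalancing

lemma sixteen_pow_le_choose (p : ℕ) : (16 : ℝ) ^ p ≤ (17 * p).choose p := by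
  refine le_trans ?_ (Nat.pow_le_choose p (17 * p))
  have base_le : 16 * (p : ℝ) ≤ ((17 * p + 1 - p : ℕ) : ℝ) := by
    exact_mod_cast (by lia : 16 * p ≤ 17 * p + 1 - p)
  have factorial_le : (p.factorial : ℝ) ≤ (p : ℝ) ^ p := by exact_mod_cast Nat.factorial_le_pow p
  rw [le_div_iff₀ (by positivity)]
  calc (16 : ℝ) ^ p * p.factorial ≤ 16 ^ p * (p : ℝ) ^ p := by gcongr
    _ = (16 * (p : ℝ)) ^ p := (mul_pow _ _ _).symm
    _ ≤ _ := by gcongr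

lemma add_pow_le_of_abs_sub_sub_le {x t M : ℝ} (p : ℕ) (ht : 0 ≤ t) (hM : 0 ≤ M)
    (h : |x - (t - M)| ≤ M / 100) :
    (x + M) ^ (68 * p) ≤ 2 ^ p * (t ^ (68 * p) + M ^ (68 * p)) := by
  obtain ⟨lower, upper⟩ := abs_le.1 h
  have abs_le_max : |x + M| ≤ 1.01 * max t M := by
    have := le_max_left t M
    have := le_max_right t M
    exact abs_le.2 ⟨by linarith, by linarith⟩
  have max_pow_le : max t M ^ (68 * p) ≤ t ^ (68 * p) + M ^ (68 * p) := by
    rcases max_choice t M with hmax | hmax <;> rw [hmax]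
    · exact le_add_of_nonneg_right (by positivity)
    · exact le_add_of_nonneg_left (by positivity)
  calc (x + M) ^ (68 * p) ≤ |x + M| ^ (68 * p) := by
        rw [← abs_pow]
        exact le_abs_self _
    _ ≤ (1.01 * max t M) ^ (68 * p) := pow_le_pow_left₀ (abs_nonneg _) abs_le_max _
    _ = (1.01 ^ 68) ^ p * max t M ^ (68 * p) := by rw [mul_pow, pow_mul]
    _ ≤ 2 ^ p * (t ^ (68 * p) + M ^ (68 * p)) := by
        gcongr
        norm_num

variable {G : Type*} [AddCommGroup G] [Fintype G] {D : Finset G} {f c : G → ℝ} {M : ℝ}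

-- Every term of the binomial expansion is nonnegative; the term of degree `p` already suffices.
lemma two_pow_mul_le_sum_sum_corr_add_pow {p : ℕ} (hM : 0 ≤ M)
    (h : (#D : ℝ) ^ 2 * (M / 8) ^ p ≤ ∑ u ∈ D, ∑ v ∈ D, corr f f (v - u) ^ p) :
    2 ^ p * M ^ (17 * p) * (#D : ℝ) ^ 2 ≤
      ∑ u ∈ D, ∑ v ∈ D, (corr f f (v - u) + M) ^ (17 * p) := by
  have binomial : ∑ u ∈ D, ∑ v ∈ D, (corr f f (v - u) + M) ^ (17 * p) =
      ∑ j ∈ range (17 * p + 1), M ^ (17 * p - j) * (17 * p).choose j *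
        ∑ u ∈ D, ∑ v ∈ D, corr f f (v - u) ^ j := by
    simp_rw [add_pow, mul_sum]
    rw [sum_congr rfl fun u _ ↦ sum_comm, sum_comm]
    exact sum_congr rfl fun j _ ↦ sum_congr rfl fun u _ ↦ sum_congr rfl fun v _ ↦ by ring
  calc 2 ^ p * M ^ (17 * p) * (#D : ℝ) ^ 2
      = M ^ (17 * p - p) * 16 ^ p * ((#D : ℝ) ^ 2 * (M / 8) ^ p) := by
        rw [← pow_sub_mul_pow M (by lia : p ≤ 17 * p), div_pow,
          (by norm_num : (16 : ℝ) = 2 * 8), mul_pow]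
        field_simp
    _ ≤ M ^ (17 * p - p) * (17 * p).choose p * ∑ u ∈ D, ∑ v ∈ D, corr f f (v - u) ^ p := by
        gcongr
        exact sixteen_pow_le_choose p
    _ ≤ _ := by
        rw [binomial]
        exact single_le_sum (f := fun j ↦ M ^ (17 * p - j) * (17 * p).choose j *
          ∑ u ∈ D, ∑ v ∈ D, corr f f (v - u) ^ j)
          (fun j _ ↦ mul_nonneg (by positivity) (sum_sum_corr_pow_nonneg f D j))
          (mem_range.2 (by lia))

lemma four_pow_mul_le_sum_sum_pow {p : ℕ} (hp : p ≠ 0) (hM : 0 ≤ M) (hc : ∀ x, 0 ≤ c x)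
    (hfc : ∀ u ∈ D, ∀ v ∈ D, |corr f f (v - u) - (c (v - u) - M)| ≤ M / 100)
    (h : (#D : ℝ) ^ 2 * (M / 8) ^ (4 * p) ≤ ∑ u ∈ D, ∑ v ∈ D, corr f f (v - u) ^ (4 * p)) :
    4 ^ p * M ^ (68 * p) * (#D : ℝ) ^ 2 ≤ ∑ u ∈ D, ∑ v ∈ D, c (v - u) ^ (68 * p) := by
  have lower := two_pow_mul_le_sum_sum_corr_add_pow hM h
  rw [← mul_assoc 17 4 p] at lower
  have upper : ∑ u ∈ D, ∑ v ∈ D, (corr f f (v - u) + M) ^ (68 * p) ≤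
      2 ^ p * (∑ u ∈ D, ∑ v ∈ D, c (v - u) ^ (68 * p) + M ^ (68 * p) * (#D : ℝ) ^ 2) := by
    calc _ ≤ ∑ u ∈ D, ∑ v ∈ D, 2 ^ p * (c (v - u) ^ (68 * p) + M ^ (68 * p)) :=
          sum_le_sum fun u hu ↦ sum_le_sum fun v hv ↦
            add_pow_le_of_abs_sub_sub_le p (hc _) hM (hfc u hu v hv)
      _ = _ := by
          simp_rw [← mul_sum, sum_add_distrib, sum_const, nsmul_eq_mul]
          ring
  have two_pow : (2 : ℝ) ^ (4 * p) = 2 ^ p * 8 ^ p := by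
    rw [pow_mul, ← mul_pow]
    norm_num
  have four_pow_add_one_le : (4 : ℝ) ^ p + 1 ≤ 8 ^ p := by
    have eight_pow : (8 : ℝ) ^ p = 4 ^ p * 2 ^ p := by rw [← mul_pow]; norm_num
    have : (2 : ℝ) ≤ 2 ^ p := le_self_pow₀ one_le_two hp
    have : (1 : ℝ) ≤ 4 ^ p := one_le_pow₀ (by norm_num)
    nlinarith
  have combined : 8 ^ p * (M ^ (68 * p) * (#D : ℝ) ^ 2) ≤
      ∑ u ∈ D, ∑ v ∈ D, c (v - u) ^ (68 * p) + M ^ (68 * p) * (#D : ℝ) ^ 2 := by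
    refine le_of_mul_le_mul_left (lower.trans upper |>.trans' ?_) (by positivity : (0 : ℝ) < 2 ^ p)
    rw [two_pow]
    exact le_of_eq (by ring)
  have : 0 ≤ M ^ (68 * p) * (#D : ℝ) ^ 2 := by positivity
  nlinarith

lemma card_mul_pow_le_sum_pow_of_sum_le_neg {ι : Type*} {s : Finset ι} {g : ι → ℝ} {a : ℝ} {p : ℕ}
    (hp : Even p) (ha : 0 ≤ a) (h : ∑ i ∈ s, g i ≤ -(a * #s)) :
    #s * a ^ p ≤ ∑ i ∈ s, g i ^ p := by
  rcases s.eq_empty_or_nonempty with rfl | hs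
  · simp
  have hs₀ : (0 : ℝ) < #s := by exact_mod_cast hs.card_pos
  have power_mean := Real.pow_arith_mean_le_arith_mean_pow_of_even s (fun _ ↦ (#s : ℝ)⁻¹) g
    (fun _ _ ↦ by positivity) (by simp [hs₀.ne']) hp
  rw [← mul_sum, ← mul_sum, ← div_eq_inv_mul, ← div_eq_inv_mul, le_div_iff₀ hs₀] at power_mean
  have pow_le : a ^ p ≤ ((∑ i ∈ s, g i) / #s) ^ p := by
    rw [← hp.neg_pow (_ / _)]
    refine pow_le_pow_left₀ ha ?_ p
    rw [← neg_div, le_div_iff₀ hs₀]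
    linarith
  calc #s * a ^ p ≤ ((∑ i ∈ s, g i) / #s) ^ p * #s := by
        rw [mul_comm]
        gcongr
    _ ≤ _ := power_mean

variable {A B : Finset G}

lemma card_sq_mul_sum_conv_pow_le {p : ℕ} (f : G → ℝ) (hp : Even p)
    (hD : ∀ u ∈ D, ∀ v ∈ D, ∃ h, h + h = v - u ∧ ∀ b ∈ A, b - h ∈ B) :
    (#D : ℝ) ^ 2 * ∑ y ∈ A, conv f f (y + y) ^ p ≤
      #B * ∑ u ∈ D, ∑ v ∈ D, corr f f (v - u) ^ p := by
  classical
  have shift_le {u v : G} (hu : u ∈ D) (hv : v ∈ D) : ∑ y ∈ A, conv f f (y + y) ^ p ≤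
      ∑ y ∈ B, conv f f (v - u + (y + y)) ^ p := by
    obtain ⟨h, hh, hAB⟩ := hD u hu v hv
    calc ∑ y ∈ A, conv f f (y + y) ^ p
        = ∑ y ∈ A.image (· - h), conv f f (v - u + (y + y)) ^ p := by
          rw [sum_image sub_left_injective.injOn]
          refine sum_congr rfl fun y _ ↦ ?_
          rw [← hh, show h + h + (y - h + (y - h)) = y + y by abel]
      _ ≤ _ := sum_le_sum_of_subset_of_nonneg (image_subset_iff.2 hAB) fun _ _ _ ↦ hp.pow_nonneg _
  calc (#D : ℝ) ^ 2 * ∑ y ∈ A, conv f f (y + y) ^ p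
      = ∑ _u ∈ D, ∑ _v ∈ D, ∑ y ∈ A, conv f f (y + y) ^ p := by
        simp only [sum_const, nsmul_eq_mul]
        ring
    _ ≤ ∑ u ∈ D, ∑ v ∈ D, ∑ y ∈ B, conv f f (v - u + (y + y)) ^ p :=
        sum_le_sum fun u hu ↦ sum_le_sum fun v hv ↦ shift_le hu hv
    _ = ∑ y ∈ B, ∑ u ∈ D, ∑ v ∈ D, conv f f (v - u + (y + y)) ^ p := by
        rw [sum_congr rfl fun u _ ↦ sum_comm, sum_comm]
    _ ≤ ∑ _y ∈ B, ∑ u ∈ D, ∑ v ∈ D, corr f f (v - u) ^ p :=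
        sum_le_sum fun y _ ↦ sum_sum_conv_pow_le_sum_sum_corr_pow f D p (y + y)
    _ = _ := by rw [sum_const, nsmul_eq_mul]

lemma card_sq_mul_pow_le_sum_sum_corr_pow {p : ℕ} (hp : Even p) (hM : 0 ≤ M) (hA : A.Nonempty)
    (hfew : ∑ y ∈ A, c (y + y) ≤ M / 2 * #A)
    (hfc : ∀ y ∈ A, |conv f f (y + y) - (c (y + y) - M)| ≤ M / 100)
    (hD : ∀ u ∈ D, ∀ v ∈ D, ∃ h, h + h = v - u ∧ ∀ b ∈ A, b - h ∈ B)
    (hB : (#B : ℝ) ≤ 2 ^ p * #A) :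
    (#D : ℝ) ^ 2 * (M / 8) ^ p ≤ ∑ u ∈ D, ∑ v ∈ D, corr f f (v - u) ^ p := by
  have sum_conv_le : ∑ y ∈ A, conv f f (y + y) ≤ -(M / 4 * #A) := by
    calc ∑ y ∈ A, conv f f (y + y) ≤ ∑ y ∈ A, (c (y + y) - M + M / 100) :=
          sum_le_sum fun y hy ↦ by linarith [(abs_le.1 (hfc y hy)).2]
      _ = ∑ y ∈ A, c (y + y) - M * #A + M / 100 * #A := by
          rw [sum_add_distrib, sum_sub_distrib, sum_const, sum_const, nsmul_eq_mul, nsmul_eq_mul]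
          ring
      _ ≤ _ := by nlinarith
  have power_sum := card_mul_pow_le_sum_pow_of_sum_le_neg hp (by positivity) sum_conv_le
  refine le_of_mul_le_mul_left ?_ (by positivity : (0 : ℝ) < 2 ^ p * #A)
  calc 2 ^ p * #A * ((#D : ℝ) ^ 2 * (M / 8) ^ p) = (#D : ℝ) ^ 2 * (#A * (M / 4) ^ p) := by
        rw [(by ring : M / 4 = 2 * (M / 8)), mul_pow]
        ring
    _ ≤ (#D : ℝ) ^ 2 * ∑ y ∈ A, conv f f (y + y) ^ p := by gcongr
    _ ≤ #B * ∑ u ∈ D, ∑ v ∈ D, corr f f (v - u) ^ p := card_sq_mul_sum_conv_pow_le f hp hD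
    _ ≤ _ := by
        gcongr
        exact sum_sum_corr_pow_nonneg f D p

end Unbalancing

/-! ### Density increment from almost-periods -/

section Increment

variable {G : Type*} [AddCommGroup G] [DecidableEq G] {A' S Ω X : Finset G} {δ : ℝ}

lemma IsAlmostPeriod.sum_reflDensity_sub_le {z t : G} (ht : IsAlmostPeriod A' S Ω δ t)
    (hz : ∀ v ∈ A', v + z ∈ Ω) (hzt : ∀ v ∈ A', v + z + t ∈ Ω) (hδ : 0 ≤ δ) :
    ∑ v ∈ A', reflDensity A' S (v + z) - 4 * δ * #A' ≤
      ∑ v ∈ A', reflDensity A' S (v + z + t) := by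
  set bad := {x ∈ Ω | x + t ∈ Ω ∧ 2 * δ < |reflDensity A' S (x + t) - reflDensity A' S x|}
  have pointwise {v : G} (hv : v ∈ A') : reflDensity A' S (v + z) ≤
      reflDensity A' S (v + z + t) + 2 * δ + if v + z ∈ bad then 1 else 0 := by
    split_ifs with hbad
    · linarith [reflDensity_le_one A' S (v + z), reflDensity_nonneg A' S (v + z + t)]
    · have close : |reflDensity A' S (v + z + t) - reflDensity A' S (v + z)| ≤ 2 * δ := by
        by_contra! hlt
        exact hbad (mem_filter.2 ⟨hz v hv, hzt v hv, hlt⟩)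
      linarith [(abs_le.1 close).1]
  have card_bad : ∑ v ∈ A', (if v + z ∈ bad then (1 : ℝ) else 0) ≤ 2 * δ * #A' := by
    refine le_trans ?_ ht
    rw [sum_boole]
    exact_mod_cast card_le_card_of_injOn (· + z) (fun v hv ↦ (mem_filter.1 hv).2)
      (add_left_injective z).injOn
  have := sum_le_sum fun v hv ↦ pointwise (v := v) hv
  rw [sum_add_distrib, sum_add_distrib, sum_const, nsmul_eq_mul] at this
  linarith

lemma sum_reflDensity_sub_le_of_tuples (hδ : 0 ≤ δ)
    (hX : ∀ e ∈ X, ∀ e' ∈ X, IsAlmostPeriod A' S Ω δ (e - e')) {k : ℕ}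
    (hΩ : ∀ j ≤ k, ∀ f f' : Fin j → G, (∀ i, f i ∈ X) → (∀ i, f' i ∈ X) → ∀ v ∈ A',
      v + (∑ i, f i - ∑ i, f' i) ∈ Ω) (j : ℕ) (hj : j ≤ k) (f f' : Fin j → G)
    (hf : ∀ i, f i ∈ X) (hf' : ∀ i, f' i ∈ X) :
    ∑ v ∈ A', reflDensity A' S v - 4 * δ * j * #A' ≤
      ∑ v ∈ A', reflDensity A' S (v + (∑ i, f i - ∑ i, f' i)) := by
  induction j with
  | zero => simp
  | succ j ih =>
    have shift_eq (v : G) : v + (∑ i, f i - ∑ i, f' i) =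
        v + (∑ i : Fin j, f i.castSucc - ∑ i : Fin j, f' i.castSucc) +
          (f (Fin.last j) - f' (Fin.last j)) := by
      rw [Fin.sum_univ_castSucc, Fin.sum_univ_castSucc (f := f')]
      abel
    have prev := ih (by lia) (fun i ↦ f i.castSucc) (fun i ↦ f' i.castSucc)
      (fun i ↦ hf _) fun i ↦ hf' _
    have step := (hX _ (hf (Fin.last j)) _ (hf' (Fin.last j))).sum_reflDensity_sub_le
      (hΩ j (by lia) _ _ (fun i ↦ hf _) fun i ↦ hf' _)
      (fun v hv ↦ shift_eq v ▸ hΩ (j + 1) hj f f' hf hf' v hv) hδ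
    simp_rw [shift_eq]
    push_cast
    linarith

lemma card_mul_sum_reflDensity_add (S : Finset G) (hA' : A'.Nonempty) (t : G) :
    #A' * ∑ v ∈ A', reflDensity A' S (v + t) = ∑ u ∈ A', ∑ v ∈ A', ind S (v - u + t) := by
  have hA'₀ : (#A' : ℝ) ≠ 0 := by exact_mod_cast hA'.card_pos.ne'
  simp only [reflDensity, mul_sum, mul_div_cancel₀ _ hA'₀]
  rw [sum_comm]
  exact sum_congr rfl fun u _ ↦ sum_congr rfl fun v _ ↦ by congr 1; abel

variable [Fintype G] {A V : Finset G} {M : ℝ} {k : ℕ}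

lemma le_sum_sum_corr_add (hA' : A'.Nonempty) (hM : 0 ≤ M) (hk : 0 < k)
    (hS : ∀ x, x ∈ S ↔ 1.01 * M ≤ corr (ind A) (ind A) x)
    (hbad : 1000 * ∑ u ∈ A', ∑ v ∈ A',
      (if corr (ind A) (ind A) (v - u) < 1.01 * M then (1 : ℝ) else 0) ≤ (#A' : ℝ) ^ 2)
    (hX : ∀ e ∈ X, ∀ e' ∈ X, IsAlmostPeriod A' S Ω (1 / (4000 * k)) (e - e'))
    (hΩ : ∀ j ≤ k, ∀ f f' : Fin j → G, (∀ i, f i ∈ X) → (∀ i, f' i ∈ X) → ∀ v ∈ A',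
      v + (∑ i, f i - ∑ i, f' i) ∈ Ω)
    {f f' : Fin k → G} (hf : ∀ i, f i ∈ X) (hf' : ∀ i, f' i ∈ X) :
    1.007 * M * (#A' : ℝ) ^ 2 ≤
      ∑ u ∈ A', ∑ v ∈ A', corr (ind A) (ind A) (v - u + (∑ i, f i - ∑ i, f' i)) := by
  have hA'₀ : (0 : ℝ) < #A' := by exact_mod_cast hA'.card_pos
  set z := ∑ i, f i - ∑ i, f' i
  have ind_eq (x : G) :
      ind S x = 1 - if corr (ind A) (ind A) x < 1.01 * M then (1 : ℝ) else 0 := by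
    by_cases h : corr (ind A) (ind A) x < 1.01 * M <;> simp [ind, hS, h, not_le.2, not_lt.1]
  have most : 0.999 * (#A' : ℝ) ^ 2 ≤ ∑ u ∈ A', ∑ v ∈ A', ind S (v - u) := by
    simp only [ind_eq, sum_sub_distrib, sum_const, nsmul_eq_mul, mul_one]
    nlinarith
  have most_shifted : 0.998 * (#A' : ℝ) ^ 2 ≤ ∑ u ∈ A', ∑ v ∈ A', ind S (v - u + z) := by
    have chain := sum_reflDensity_sub_le_of_tuples (by positivity) hX hΩ k le_rfl f f' hf hf'
    have total_loss : 4 * (1 / (4000 * k : ℝ)) * k * #A' = 0.001 * #A' := by field_simp; norm_num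
    have unshifted := card_mul_sum_reflDensity_add S hA' 0
    have shifted := card_mul_sum_reflDensity_add S hA' z
    simp only [add_zero] at unshifted
    rw [total_loss] at chain
    nlinarith [mul_le_mul_of_nonneg_left chain hA'₀.le]
  calc 1.007 * M * (#A' : ℝ) ^ 2 ≤ 1.01 * M * (0.998 * (#A' : ℝ) ^ 2) := by
        nlinarith [mul_nonneg hM (sq_nonneg (#A' : ℝ))]
    _ ≤ 1.01 * M * ∑ u ∈ A', ∑ v ∈ A', ind S (v - u + z) := by gcongr
    _ ≤ ∑ u ∈ A', ∑ v ∈ A', corr (ind A) (ind A) (v - u + z) := by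
        simp_rw [mul_sum]
        refine sum_le_sum fun u _ ↦ sum_le_sum fun v _ ↦ ?_
        by_cases hmem : v - u + z ∈ S
        · simpa [ind, hmem] using (hS _).1 hmem
        · simpa [ind, hmem] using corr_ind_nonneg A A _

lemma hereditarilyDense_of_le_sum_corr {ι : Type*} {s : Finset ι} {t : ι → G} {a : ℝ}
    (hs : s.Nonempty) (hA : A.Nonempty)
    (h : ∀ y ∈ V, a * (#s * #A) ≤ ∑ i ∈ s, corr (ind A) (ind A) (t i + y)) :
    HereditarilyDense A V a := by
  intro w hw hsupp
  have weighted :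
      (#s * #A) * (a * ∑ y, w y) ≤ ∑ y, w y * ∑ i ∈ s, corr (ind A) (ind A) (t i + y) := by
    rw [mul_sum, mul_sum]
    refine sum_le_sum fun y _ ↦ ?_
    by_cases hy : w y = 0
    · simp [hy]
    · nlinarith [mul_le_mul_of_nonneg_left (h y (hsupp y hy)) (hw y)]
  have swap : ∑ y, w y * ∑ i ∈ s, corr (ind A) (ind A) (t i + y) =
      ∑ q ∈ s ×ˢ A, ∑ y, w y * ind A (q.2 + t q.1 + y) := by
    simp only [corr_ind, mul_sum, sum_product, add_assoc]
    rw [sum_comm]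
    exact sum_congr rfl fun i _ ↦ sum_comm
  obtain ⟨q, -, hq⟩ := exists_le_of_sum_le (hs.product hA)
    (f := fun _ ↦ a * ∑ y, w y) (g := fun q ↦ ∑ y, w y * ind A (q.2 + t q.1 + y)) (by
      rw [sum_const, card_product, nsmul_eq_mul, ← swap]
      exact_mod_cast weighted)
  exact ⟨_, hq⟩

lemma mul_le_smoothedCorr_zero {c : ℝ}
    (h : ∀ f f' : Fin k → G, (∀ i, f i ∈ X) → (∀ i, f' i ∈ X) → c * (#A' : ℝ) ^ 2 ≤
      ∑ u ∈ A', ∑ v ∈ A', corr (ind A) (ind A) (v - u + (∑ i, f i - ∑ i, f' i))) :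
    c * ((#A' : ℝ) ^ 2 * ((#X : ℝ) ^ 2) ^ k) ≤ smoothedCorr A A' X k 0 := by
  set P := Fintype.piFinset (fun _ : Fin k ↦ X)
  have reorder : smoothedCorr A A' X k 0 = ∑ e ∈ P, ∑ e' ∈ P, ∑ u ∈ A', ∑ v ∈ A',
      corr (ind A) (ind A) (v - u + (∑ i, e i - ∑ i, e' i)) := by
    simp only [smoothedCorr, add_zero]
    rw [sum_congr rfl fun u _ ↦ sum_comm, sum_comm]
    refine sum_congr rfl fun e _ ↦ ?_
    rw [sum_congr rfl fun u _ ↦ sum_comm, sum_comm]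
  rw [reorder]
  calc c * ((#A' : ℝ) ^ 2 * ((#X : ℝ) ^ 2) ^ k) = ∑ _e ∈ P, ∑ _e' ∈ P, c * (#A' : ℝ) ^ 2 := by
        simp only [sum_const, nsmul_eq_mul, P, Fintype.card_piFinset_const, Nat.cast_pow]
        ring
    _ ≤ _ := sum_le_sum fun e he ↦ sum_le_sum fun e' he' ↦
        h e e' (Fintype.mem_piFinset.1 he) (Fintype.mem_piFinset.1 he')

lemma hereditarilyDense_of_le_smoothedCorr {a : ℝ} (hA : A.Nonempty) (hA' : A'.Nonempty)
    (hX : X.Nonempty)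
    (h : ∀ y ∈ V, a * #A * ((#A' : ℝ) ^ 2 * ((#X : ℝ) ^ 2) ^ k) ≤ smoothedCorr A A' X k y) :
    HereditarilyDense A V a := by
  set P := Fintype.piFinset (fun _ : Fin k ↦ X)
  have hP : P.Nonempty := Fintype.piFinset_nonempty.2 fun _ ↦ hX
  refine hereditarilyDense_of_le_sum_corr (s := A' ×ˢ A' ×ˢ P ×ˢ P)
    (t := fun q ↦ q.2.1 - q.1 + (∑ i, q.2.2.1 i - ∑ i, q.2.2.2 i))
    (hA'.product (hA'.product (hP.product hP))) hA fun y hy ↦ ?_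
  refine (h y hy).trans_eq' ?_ |>.trans_eq ?_
  · simp only [card_product, P, Fintype.card_piFinset_const, Nat.cast_mul, Nat.cast_pow]
    ring
  · simp only [smoothedCorr, sum_product, P]

lemma hereditarilyDense_of_largeSpectrum {a η : ℝ} (hA : A.Nonempty) (hA' : A'.Nonempty)
    (hX : X.Nonempty)
    (h : ∀ f f' : Fin k → G, (∀ i, f i ∈ X) → (∀ i, f' i ∈ X) →
      1.007 * (a * #A) * (#A' : ℝ) ^ 2 ≤
        ∑ u ∈ A', ∑ v ∈ A', corr (ind A) (ind A) (v - u + (∑ i, f i - ∑ i, f' i)))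
    (hη : 0 ≤ η) (hηk : 2 * (1 / 4) ^ k + η ≤ 0.002 * a)
    (hV : ∀ y ∈ V, ∀ γ, InLargeSpectrum X γ → ‖γ y - 1‖ ≤ η) :
    HereditarilyDense A V (1.005 * a) := by
  refine hereditarilyDense_of_le_smoothedCorr (k := k) hA hA' hX fun y hy ↦ ?_
  set T := (#A' : ℝ) ^ 2 * ((#X : ℝ) ^ 2) ^ k
  have close := abs_smoothedCorr_sub_le A A' k hη (hV y hy)
  have error : #A * T * (2 * (1 / 4) ^ k + η) ≤ #A * T * (0.002 * a) := by gcongr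
  linarith [(abs_le.1 (close.trans error)).1, mul_le_smoothedCorr_zero h]

end Increment

/-! ### Quantitative density increment -/

section Parameters

/-- The number of random translates sampled in the Croot–Sisask argument, for sets of density at
least `2 ^ (-P)`. -/
def sampleSize (P : ℕ) : ℕ := 64000000 * P ^ 2 * (17 + P + 68 * P ^ 2)

/-- The number of new frequencies in one density increment, for sets of density at least
`2 ^ (-P)`. -/
def rankBound (P : ℕ) : ℕ := 8 * (4 + (3 + 68 * P ^ 2) * sampleSize P)

lemma two_pow_le_exp (n : ℕ) : (2 : ℝ) ^ n ≤ Real.exp n := by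
  rw [← Real.exp_one_pow n]
  have := Real.exp_one_gt_two
  gcongr

lemma half_pow_le_half_pow {m n : ℕ} (h : m ≤ n) : (1 / 2 : ℝ) ^ n ≤ (1 / 2) ^ m :=
  pow_le_pow_of_le_one (by norm_num) (by norm_num) h

lemma half_pow_succ_add_self (s : ℕ) : (1 / 2 : ℝ) ^ (s + 1) + (1 / 2) ^ (s + 1) = (1 / 2) ^ s := by
  ring

lemma natCast_mul_half_pow_le {n q : ℕ} (s : ℕ) (h : n ≤ 2 ^ q) :
    (n : ℝ) * (1 / 2) ^ (s + q) ≤ (1 / 2) ^ s := by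
  have hn : (n : ℝ) ≤ 2 ^ q := by exact_mod_cast h
  calc (n : ℝ) * (1 / 2) ^ (s + q) ≤ 2 ^ q * (1 / 2) ^ (s + q) := by gcongr
    _ = (1 / 2) ^ s := by rw [pow_add, mul_left_comm, ← mul_pow]; norm_num

variable {P : ℕ} {α : ℝ}

lemma half_pow_mul_sq_le {b m n : ℝ} (hb : 0 ≤ b) (hα : (1 / 2) ^ P ≤ α)
    (hm : (1 / 2) ^ P * b ≤ m) (hn : (1 / 2) ^ P * b ≤ n) :
    (1 / 2) ^ (3 * P + 1) * b ^ 2 ≤ α * m / 2 * n := by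
  have hα₀ : 0 ≤ α := hα.trans' (by positivity)
  have hm₀ : 0 ≤ m := hm.trans' (by positivity)
  calc (1 / 2) ^ (3 * P + 1) * b ^ 2
      = (1 / 2) ^ P * ((1 / 2) ^ P * b) / 2 * ((1 / 2) ^ P * b) := by ring
    _ ≤ α * m / 2 * n := by gcongr

lemma eight_div_pow_le_two_pow (hα : (1 / 2) ^ P ≤ α) :
    8 / α ^ (68 * P) ≤ 2 ^ (3 + 68 * P ^ 2) := by
  have hα₀ : 0 < α := lt_of_lt_of_le (by positivity) hα
  have one_le : 1 ≤ 2 ^ P * α := by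
    calc (1 : ℝ) = 2 ^ P * (1 / 2) ^ P := by rw [← mul_pow]; norm_num
      _ ≤ 2 ^ P * α := by gcongr
  have pow_eq : (2 : ℝ) ^ (3 + 68 * P ^ 2) * α ^ (68 * P) = 8 * (2 ^ P * α) ^ (68 * P) := by ring
  rw [div_le_iff₀ (by positivity), pow_eq]
  linarith [one_le_pow₀ one_le (n := 68 * P)]

lemma two_mul_exp_sampleSize_le (hP : 0 < P) (hα : (1 / 2) ^ P ≤ α) :
    2 * Real.exp (-((1 / (4000 * P : ℝ)) ^ 2 * sampleSize P / 4)) ≤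
      1 / (4000 * P : ℝ) / (2 * (8 / α ^ (68 * P))) := by
  have hα₀ : 0 < α := lt_of_lt_of_le (by positivity) hα
  have exponent : (1 / (4000 * P : ℝ)) ^ 2 * sampleSize P / 4 = (17 + P + 68 * P ^ 2 : ℕ) := by
    simp only [sampleSize]
    push_cast
    field_simp
    norm_num
  have hP_le : (P : ℝ) ≤ 2 ^ P := by exact_mod_cast Nat.lt_two_pow_self.le
  have hK := eight_div_pow_le_two_pow hα
  set K := 8 / α ^ (68 * P)
  have exp_ge : 16000 * K * P ≤ Real.exp (17 + P + 68 * P ^ 2 : ℕ) := by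
    calc 16000 * K * P ≤ 2 ^ 14 * 2 ^ (3 + 68 * P ^ 2) * 2 ^ P := by gcongr; norm_num
      _ = 2 ^ (17 + P + 68 * P ^ 2) := by ring
      _ ≤ _ := two_pow_le_exp _
  rw [exponent, Real.exp_neg, ← div_eq_mul_inv, div_div,
    div_le_div_iff₀ (Real.exp_pos _) (by positivity)]
  linarith

lemma mul_pow_sampleSize_lt_exp_rankBound (hα : (1 / 2) ^ P ≤ α) :
    2 * (4 * (8 / α ^ (68 * P)) ^ sampleSize P) < Real.exp (rankBound P / 8) := by
  have hα₀ : 0 < α := lt_of_lt_of_le (by positivity) hα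
  have exponent : (rankBound P : ℝ) / 8 = (4 + (3 + 68 * P ^ 2) * sampleSize P : ℕ) := by
    simp only [rankBound]
    push_cast
    ring
  have hpos : (0 : ℝ) < (2 ^ (3 + 68 * P ^ 2)) ^ sampleSize P := by positivity
  rw [exponent]
  calc 2 * (4 * (8 / α ^ (68 * P)) ^ sampleSize P)
      ≤ 2 * (4 * (2 ^ (3 + 68 * P ^ 2)) ^ sampleSize P) := by
        gcongr
        exact eight_div_pow_le_two_pow hα
    _ < 2 ^ 4 * (2 ^ (3 + 68 * P ^ 2)) ^ sampleSize P := by linarith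
    _ = 2 ^ (4 + (3 + 68 * P ^ 2) * sampleSize P) := by rw [pow_add _ 4, pow_mul]
    _ ≤ _ := two_pow_le_exp _

lemma two_mul_quarter_pow_le (hP : 12 ≤ P) (hα : (1 / 2) ^ P ≤ α) :
    2 * (1 / 4 : ℝ) ^ P ≤ 0.001 * α := by
  have half_pow_le : (1 / 2 : ℝ) ^ P ≤ (1 / 2) ^ 12 :=
    pow_le_pow_of_le_one (by norm_num) (by norm_num) hP
  have quarter_pow : (1 / 4 : ℝ) ^ P = (1 / 2) ^ P * (1 / 2) ^ P := by rw [← mul_pow]; norm_num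
  rw [quarter_pow]
  nlinarith [pow_pos (one_half_pos (α := ℝ)) P]

lemma four_mul_half_pow_add_le {q : ℕ} (hα : (1 / 2) ^ P ≤ α) (hRq : rankBound P ≤ 2 ^ q) :
    4 * (1 / 2 : ℝ) ^ (P + 13) + rankBound P * (1 / 2) ^ (P + 11 + q) ≤ 0.001 * α := by
  have rank_mul_le := natCast_mul_half_pow_le (P + 11) hRq
  have hpos := pow_pos (one_half_pos (α := ℝ)) P
  calc 4 * (1 / 2 : ℝ) ^ (P + 13) + rankBound P * (1 / 2) ^ (P + 11 + q)
      ≤ 4 * (1 / 2) ^ (P + 13) + (1 / 2) ^ (P + 11) := by gcongr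
    _ = (1 / 2) ^ P / 1024 := by rw [pow_add, pow_add]; ring
    _ ≤ 0.001 * α := by linarith

end Parameters

section QuantitativeIncrement

variable {G : Type*} [AddCommGroup G] [Fintype G] {α : ℝ} {P : ℕ}

lemma sum_sub_sum_mem_bohr {Γ : Finset (AddChar G ℂ)} {r : ℝ} {j q s : ℕ} (hj : 2 * j ≤ 2 ^ q)
    (hr : r ≤ (1 / 2) ^ (s + q)) {f f' : Fin j → G} (hf : ∀ i, f i ∈ bohr Γ r)
    (hf' : ∀ i, f' i ∈ bohr Γ r) : ∑ i, f i - ∑ i, f' i ∈ bohr Γ ((1 / 2) ^ s) := by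
  refine bohr_mono ?_ (sub_mem_bohr (sum_mem_bohr univ fun i _ ↦ hf i)
    (sum_mem_bohr univ fun i _ ↦ hf' i))
  calc (#(univ : Finset (Fin j)) : ℝ) * r + #(univ : Finset (Fin j)) * r
      = (2 * j : ℕ) * r := by push_cast [card_univ, Fintype.card_fin]; ring
    _ ≤ (2 * j : ℕ) * (1 / 2) ^ (s + q) := by gcongr
    _ ≤ (1 / 2) ^ s := natCast_mul_half_pow_le s hj

variable [DecidableEq G]

-- Few solutions of `x + z = 2y` make `conv f f` negative on average over `2 • A₂`, where `f` is the
-- balanced function of `A₁`; hence high moments of `corr f f` are large, and then so are those of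
-- `corr (ind A₁) (ind A₁)`.
lemma exists_sifted_subset {A₁ B₁ V A₂ B₂ D : Finset G} {δ : ℝ} (hP : 12 ≤ P)
    (hA₁ : A₁ ⊆ B₁) (hB₁ : B₁.Nonempty) (hB₁_neg : ∀ x ∈ B₁, -x ∈ B₁)
    (hα : (#A₁ : ℝ) = α * #B₁) (hα₀ : 0 < α) (hα₁ : α ≤ 1)
    (h0 : 0 ∈ V) (hV_neg : ∀ x ∈ V, -x ∈ V) (hV : AlmostInvariant B₁ V δ)
    (hδ₀ : 0 ≤ δ) (hδ : δ ≤ α / 200)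
    (hA₂ : A₂.Nonempty) (hA₂V : ∀ y ∈ A₂, y + y ∈ V)
    (hfew : ∑ y ∈ A₂, conv (ind A₁) (ind A₁) (y + y) ≤ α * #A₁ / 2 * #A₂)
    (hD : D.Nonempty) (hDV : ∀ u ∈ D, ∀ v ∈ D, v - u ∈ V)
    (hD_half : ∀ u ∈ D, ∀ v ∈ D, ∃ h, h + h = v - u ∧ ∀ b ∈ A₂, b - h ∈ B₂)
    (hB₂ : (#B₂ : ℝ) ≤ 2 ^ (4 * P) * #A₂) :
    ∃ A' ⊆ D, α ^ (68 * P) / 4 * #D < #A' ∧ 1000 * ∑ u ∈ A', ∑ v ∈ A',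
      (if corr (ind A₁) (ind A₁) (v - u) < 1.01 * (α * #A₁) then (1 : ℝ) else 0)
        ≤ (#A' : ℝ) ^ 2 := by
  have hA₁₀ : (0 : ℝ) < #A₁ := by rw [hα]; positivity
  set M := α * (#A₁ : ℝ) with hM
  have hM₀ : 0 ≤ M := by positivity
  have hM_sq : α ^ 2 * #B₁ = M := by rw [hM, hα]; ring
  have error_le : 2 * α * (δ * #B₁) ≤ M / 100 := by
    calc 2 * α * (δ * #B₁) ≤ 2 * α * (α / 200 * #B₁) := by gcongr
      _ = M / 100 := by rw [← hM_sq]; ring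
  have conv_close (y) (hy : y ∈ A₂) := hM_sq ▸ (hV.abs_conv_balanced_sub_le hA₁ h0 hB₁_neg hα
    hα₀.le hα₁ hδ₀ (hV_neg _ (hA₂V y hy))).trans error_le
  have corr_close (u) (hu : u ∈ D) (v) (hv : v ∈ D) := hM_sq ▸ (hV.abs_corr_balanced_sub_le hA₁ h0
    hα hα₀.le hα₁ hδ₀ (hDV u hu v hv) (hV_neg _ (hDV u hu v hv))).trans error_le
  have balanced_moment := card_sq_mul_pow_le_sum_sum_corr_pow (even_two.mul_right 2 |>.mul_right P)
    hM₀ hA₂ hfew conv_close hD_half hB₂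
  have moment := four_pow_mul_le_sum_sum_pow (by lia) hM₀ (corr_ind_nonneg A₁ A₁) corr_close
    balanced_moment
  have pow_le : (1.01 : ℝ) ^ (68 * P) ≤ 2 ^ P := by
    rw [pow_mul]
    gcongr
    norm_num
  have hA₁_nonempty : A₁.Nonempty := card_pos.1 (by exact_mod_cast hA₁₀)
  exact exists_subset_sum_corr_lt_le hA₁_nonempty hD hα₀ hM pow_le hP moment

lemma exists_subset_le_sum_sum_corr_add {A A' D E Ω : Finset G} {M : ℝ} (hP : 0 < P)
    (hα : (1 / 2) ^ P ≤ α) (hM : 0 ≤ M) (hA' : A'.Nonempty) (hA'D : A' ⊆ D)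
    (hA'_card : α ^ (68 * P) / 4 * #D ≤ #A')
    (hbad : 1000 * ∑ u ∈ A', ∑ v ∈ A',
      (if corr (ind A) (ind A) (v - u) < 1.01 * M then (1 : ℝ) else 0) ≤ (#A' : ℝ) ^ 2)
    (hE : E.Nonempty) (hΩ_card : (#Ω : ℝ) ≤ 2 * #D) (hDE : D + E ⊆ Ω)
    (hΩ : ∀ j ≤ P, ∀ f f' : Fin j → G, (∀ i, f i ∈ E) → (∀ i, f' i ∈ E) → ∀ v ∈ D,
      v + (∑ i, f i - ∑ i, f' i) ∈ Ω) :
    ∃ X ⊆ E, X.Nonempty ∧ (#E : ℝ) ≤ 2 * (8 / α ^ (68 * P)) ^ sampleSize P * #X ∧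
      ∀ f f' : Fin P → G, (∀ i, f i ∈ X) → (∀ i, f' i ∈ X) → 1.007 * M * (#A' : ℝ) ^ 2 ≤
        ∑ u ∈ A', ∑ v ∈ A', corr (ind A) (ind A) (v - u + (∑ i, f i - ∑ i, f' i)) := by
  have hα₀ : 0 < α := lt_of_lt_of_le (by positivity) hα
  have hP₁ : (1 : ℝ) ≤ P := by exact_mod_cast hP
  have Ω_le : (#Ω : ℝ) ≤ 8 / α ^ (68 * P) * #A' := by
    calc (#Ω : ℝ) ≤ 2 * #D := hΩ_card
      _ = 8 / α ^ (68 * P) * (α ^ (68 * P) / 4 * #D) := by field_simp; ring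
      _ ≤ 8 / α ^ (68 * P) * #A' := by gcongr
  obtain ⟨X, hXE, hX_card, hX⟩ := exists_almostPeriods hA' ((add_subset_add_right hA'D).trans hDE)
    {x | 1.01 * M ≤ corr (ind A) (ind A) x} Ω_le (by positivity)
    (δ := 1 / (4000 * P)) (by positivity) (by rw [div_le_one (by positivity)]; linarith)
    (n := sampleSize P) (by simp only [sampleSize]; positivity) (two_mul_exp_sampleSize_le hP hα)
  refine ⟨X, hXE, nonempty_iff_ne_empty.2 ?_, hX_card, fun f f' hf hf' ↦
    le_sum_sum_corr_add hA' hM hP (by simp) hbad hX ?_ hf hf'⟩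
  · rintro rfl
    simp [hE.ne_empty] at hX_card
  · exact fun j hj f f' hf hf' v hv ↦
      hΩ j hj f f' (fun i ↦ hXE (hf i)) (fun i ↦ hXE (hf' i)) v (hA'D hv)

lemma exists_bohr_norm_sub_one_le {X E F V : Finset G} {η η' K : ℝ} {R : ℕ} (hX : X.Nonempty)
    (hE : E.Nonempty) (hF : ∀ x ∈ X, ∀ f : Fin R → G, (∀ i, f i ∈ E) → x - ∑ i, f i ∈ F)
    (hF_card : #F ≤ K * #X) (hR : 2 * K < Real.exp (R / 8))
    (h0 : 0 ∈ V) (hV_neg : ∀ x ∈ V, -x ∈ V) (hV : AlmostInvariant E V η) (hη' : 0 ≤ η') :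
    ∃ Λ : Finset (AddChar G ℂ), #Λ ≤ R ∧ ∀ y ∈ V ∩ bohr Λ η', ∀ γ, InLargeSpectrum X γ →
      ‖γ y - 1‖ ≤ 4 * η + R * η' := by
  classical
  obtain ⟨r, hrR, l, hl⟩ := exists_dissociated_span R hX hE hF hF_card hR
  refine ⟨univ.image l, card_image_le.trans (by simpa using hrR), fun y hy γ hγ ↦ ?_⟩
  obtain ⟨hyV, hyΛ⟩ := mem_inter.1 hy
  obtain ⟨ε, hε⟩ := hl γ hγ
  have hyl (i : Fin r) : ‖l i y - 1‖ ≤ η' := mem_bohr.1 hyΛ _ (mem_image_of_mem l (mem_univ i))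
  refine (norm_apply_sub_one_le_of_mul_signedProd
    (hV.norm_map_sub_one_le h0 hE hε hyV (hV_neg y hyV)) hyl).trans ?_
  rw [Fintype.card_fin]
  gcongr

lemma exists_hereditarilyDense_bohr_of_sifted {A A' D : Finset G}
    {Γ : Finset (AddChar G ℂ)} {s q : ℕ} (hΓ : #Γ ≤ 2 ^ q) (hs : s + 4 * q + 6 ≤ 2 ^ q)
    (hRq : rankBound P ≤ 2 ^ q) (hPq : 2 * P ≤ 2 ^ q) (hP : 12 ≤ P) (hα : (1 / 2) ^ P ≤ α)
    (hA : A.Nonempty) (hA' : A'.Nonempty) (hA'D : A' ⊆ D)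
    (hA'_card : α ^ (68 * P) / 4 * #D ≤ #A')
    (hbad : 1000 * ∑ u ∈ A', ∑ v ∈ A',
      (if corr (ind A) (ind A) (v - u) < 1.01 * (α * #A) then (1 : ℝ) else 0) ≤ (#A' : ℝ) ^ 2)
    (hD : AlmostInvariant D (bohr Γ ((1 / 2) ^ s)) 1) :
    ∃ Γ' : Finset (AddChar G ℂ), #Γ' ≤ #Γ + rankBound P ∧
      HereditarilyDense A (bohr Γ' ((1 / 2) ^ (s + 6 * q + P + 17))) (1.005 * α) := by
  classical
  have hα₀ : 0 < α := lt_of_lt_of_le (by positivity) hα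
  obtain ⟨rE, hrE, hrE', hE⟩ := exists_almostInvariant_bohr (s := s + q) 0 hΓ (by lia)
  obtain ⟨rF, hrF, hrF', hF⟩ :=
    exists_almostInvariant_bohr (s := s + q + 2 * q + 0 + 2 + q) (P + 13) hΓ (by lia)
  have E_nonempty : (bohr Γ rE).Nonempty := ⟨0, zero_mem_bohr Γ (hrE.trans' (by positivity))⟩
  have F_nonempty : (bohr Γ rF).Nonempty := ⟨0, zero_mem_bohr Γ (hrF.trans' (by positivity))⟩
  have E_subset : bohr Γ rE ⊆ bohr Γ ((1 / 2) ^ s) :=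
    bohr_mono (hrE'.trans (half_pow_le_half_pow (by lia)))
  obtain ⟨X, hXE, hX, hX_card, hX_corr⟩ := exists_subset_le_sum_sum_corr_add (by lia) hα
    (by positivity) hA' hA'D hA'_card hbad E_nonempty (by linarith [show _ ≤ _ from hD])
    (add_subset_add_left E_subset) fun j hj _ _ hf hf' _ hv ↦
      add_mem_add hv (sum_sub_sum_mem_bohr (by lia) hrE' hf hf')
  have F_sums_mem (x) (hx : x ∈ X) (f : Fin (rankBound P) → G) (hf : ∀ i, f i ∈ bohr Γ rF) :
      x - ∑ i, f i ∈ bohr Γ rE + bohr Γ ((1 / 2) ^ (s + q + 2 * q + 0 + 2)) := by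
    rw [sub_eq_add_neg]
    refine add_mem_add (hXE hx)
      (neg_mem_bohr (bohr_mono ?_ (sum_mem_bohr univ fun i _ ↦ hf i)))
    refine le_trans ?_ (natCast_mul_half_pow_le _ hRq)
    rw [card_univ, Fintype.card_fin]
    gcongr
  obtain ⟨Λ, hΛ, hΛX⟩ := exists_bohr_norm_sub_one_le hX F_nonempty F_sums_mem
    (by linarith [show _ ≤ _ from hE]) (mul_pow_sampleSize_lt_exp_rankBound hα)
    (zero_mem_bohr Γ (by positivity)) (fun _ ↦ neg_mem_bohr) hF
    (η' := (1 / 2) ^ (P + 11 + q)) (by positivity)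
  refine ⟨Γ ∪ Λ, (card_union_le _ _).trans (by lia), ?_⟩
  refine (hereditarilyDense_of_largeSpectrum hA hA' hX hX_corr (η := 0.001 * α) (by positivity)
    (by linarith [two_mul_quarter_pow_le hP hα]) fun y hy γ hγ ↦
      (hΛX y hy γ hγ).trans (four_mul_half_pow_add_le hα hRq)).mono (subset_inter ?_ ?_)
  · exact bohr_anti_mono subset_union_left (half_pow_le_half_pow (by lia))
  · exact bohr_anti_mono subset_union_right (half_pow_le_half_pow (by lia))

end QuantitativeIncrement

/-! ### Density increment or many progressions -/

section ThreeAPCount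

variable {G : Type*} [AddCommGroup G] [Fintype G] [DecidableEq G] {A A₁ A₂ : Finset G} {x : G}

/-- The number of pairs `(x, d)` with `x`, `x + d` and `x + 2d` in `A`, as a real number: the
unnormalised `T(A)`. -/
def threeAPCount (A : Finset G) : ℝ := ∑ x, ∑ d, ind A x * ind A (x + d) * ind A (x + d + d)

lemma threeAPCount_eq_sum_conv (A : Finset G) :
    threeAPCount A = ∑ y ∈ A, conv (ind A) (ind A) (y + y) := by
  simp only [threeAPCount, conv, ← sum_ind_mul A, mul_sum]
  rw [sum_comm (s := univ) (t := univ) (f := fun y z ↦ ind A y * _)]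
  refine sum_congr rfl fun z _ ↦ (Fintype.sum_equiv (Equiv.addLeft z) _ _ fun d ↦ ?_)
  rw [Equiv.coe_addLeft, show z + d + (z + d) - z = z + d + d by abel]
  ring

lemma sum_conv_le_threeAPCount (h₁ : ∀ b ∈ A₁, x + b ∈ A) (h₂ : ∀ b ∈ A₂, x + b ∈ A) :
    ∑ y ∈ A₂, conv (ind A₁) (ind A₁) (y + y) ≤ threeAPCount A := by
  have conv_le (y : G) :
      conv (ind A₁) (ind A₁) (y + y) ≤ conv (ind A) (ind A) (x + y + (x + y)) := by
    unfold conv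
    rw [← Equiv.sum_comp (Equiv.addLeft x) fun z ↦ ind A z * ind A (x + y + (x + y) - z)]
    refine sum_le_sum fun z _ ↦ mul_le_mul (ind_le_ind_add h₁ z) ?_ (ind_nonneg _ _)
      (ind_nonneg _ _)
    rw [Equiv.coe_addLeft, show x + y + (x + y) - (x + z) = x + (y + y - z) by abel]
    exact ind_le_ind_add h₁ _
  have conv_nonneg (y : G) : 0 ≤ conv (ind A) (ind A) y :=
    sum_nonneg fun _ _ ↦ mul_nonneg (ind_nonneg _ _) (ind_nonneg _ _)
  calc ∑ y ∈ A₂, conv (ind A₁) (ind A₁) (y + y)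
      ≤ ∑ y ∈ A₂, conv (ind A) (ind A) (x + y + (x + y)) := sum_le_sum fun y _ ↦ conv_le y
    _ = ∑ y ∈ A₂.image (x + ·), conv (ind A) (ind A) (y + y) := by
        rw [sum_image (add_right_injective x).injOn]
    _ ≤ ∑ y ∈ A, conv (ind A) (ind A) (y + y) :=
        sum_le_sum_of_subset_of_nonneg (image_subset_iff.2 h₂) fun _ _ _ ↦ conv_nonneg _
    _ = threeAPCount A := (threeAPCount_eq_sum_conv A).symm

end ThreeAPCount

section Translates

variable {G : Type*} [AddCommGroup G] [Fintype G] [DecidableEq G] {A A₁ B₁ B₂ V : Finset G} {a : ℝ}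

lemma HereditarilyDense.of_translate {x : G} (h : HereditarilyDense A₁ V a)
    (hA₁ : ∀ b ∈ A₁, x + b ∈ A) : HereditarilyDense A V a := by
  intro w hw hsupp
  obtain ⟨y, hy⟩ := h w hw hsupp
  refine ⟨x + y, hy.trans (sum_le_sum fun z _ ↦ mul_le_mul_of_nonneg_left ?_ (hw z))⟩
  rw [add_assoc]
  exact ind_le_ind_add hA₁ _

lemma HereditarilyDense.exists_two_mul_le_density_add_density (h : HereditarilyDense A V a)
    (hB₁V : B₁ ⊆ V) (hB₂V : B₂ ⊆ V) (hB₁ : B₁.Nonempty) (hB₂ : B₂.Nonempty) :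
    ∃ x, 2 * a ≤ (#{b ∈ B₁ | x + b ∈ A} : ℝ) / #B₁ + (#{b ∈ B₂ | x + b ∈ A} : ℝ) / #B₂ := by
  have hB₁₀ : (0 : ℝ) < #B₁ := by exact_mod_cast hB₁.card_pos
  have hB₂₀ : (0 : ℝ) < #B₂ := by exact_mod_cast hB₂.card_pos
  obtain ⟨x, hx⟩ := h (fun z ↦ ind B₁ z / #B₁ + ind B₂ z / #B₂)
    (fun z ↦ add_nonneg (div_nonneg (ind_nonneg _ _) hB₁₀.le) (div_nonneg (ind_nonneg _ _) hB₂₀.le))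
    (fun z hz ↦ by
      by_contra hzV
      simp [ind, notMem_mono hB₁V hzV, notMem_mono hB₂V hzV] at hz)
  refine ⟨x, ?_⟩
  have total : ∑ z, (ind B₁ z / (#B₁ : ℝ) + ind B₂ z / #B₂) = 2 := by
    rw [sum_add_distrib, ← sum_div, ← sum_div, sum_ind, sum_ind, div_self hB₁₀.ne',
      div_self hB₂₀.ne']
    norm_num
  rw [total] at hx
  simpa only [add_mul, div_mul_eq_mul_div, sum_add_distrib, ← sum_div, sum_ind_mul, sum_ind_add,
    mul_comm a] using hx

lemma HereditarilyDense.increment_or_exists_dense_translate {W : Finset G}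
    (h : HereditarilyDense A V a) (hB₁V : B₁ ⊆ V) (hB₂V : B₂ ⊆ V) (hB₁ : B₁.Nonempty)
    (hB₂ : B₂.Nonempty) (h0 : 0 ∈ W) (hW : ∀ z ∈ W, -z ∈ W)
    (hB₁W : AlmostInvariant B₁ W (0.0005 * a)) (hB₂W : AlmostInvariant B₂ W (0.0005 * a)) :
    HereditarilyDense A W (1.001 * a) ∨
      ∃ x, 0.9985 * a * (#B₁ : ℝ) ≤ #{b ∈ B₁ | x + b ∈ A} ∧
        0.9985 * a * (#B₂ : ℝ) ≤ #{b ∈ B₂ | x + b ∈ A} := by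
  have hB₁₀ : (0 : ℝ) < #B₁ := by exact_mod_cast hB₁.card_pos
  have hB₂₀ : (0 : ℝ) < #B₂ := by exact_mod_cast hB₂.card_pos
  obtain ⟨x, hx⟩ := h.exists_two_mul_le_density_add_density hB₁V hB₂V hB₁ hB₂
  have increment {B : Finset G} (hB : B.Nonempty) (hBW : AlmostInvariant B W (0.0005 * a))
      (hdense : 1.0015 * a * (#B : ℝ) ≤ #{b ∈ B | x + b ∈ A}) :
      HereditarilyDense A W (1.001 * a) :=
    (hBW.hereditarilyDense hB h0 hW (sum_ind_add A B x ▸ hdense)).anti (by linarith)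
  rcases le_or_gt (1.0015 * a) ((#{b ∈ B₁ | x + b ∈ A} : ℝ) / #B₁) with dense₁ | sparse₁
  · exact .inl (increment hB₁ hB₁W ((le_div_iff₀ hB₁₀).1 dense₁))
  rcases le_or_gt (1.0015 * a) ((#{b ∈ B₂ | x + b ∈ A} : ℝ) / #B₂) with dense₂ | sparse₂
  · exact .inl (increment hB₂ hB₂W ((le_div_iff₀ hB₂₀).1 dense₂))
  · exact .inr ⟨x, (le_div_iff₀ hB₁₀).1 (by linarith), (le_div_iff₀ hB₂₀).1 (by linarith)⟩

end Translates

section IncrementOrMany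

variable {G : Type*} [AddCommGroup G] [Fintype G] {P q s : ℕ} {Γ : Finset (AddChar G ℂ)}

lemma exists_nsmul_add_nsmul_eq (hodd : Odd (Fintype.card G)) :
    ∃ t : ℕ, ∀ x : G, t • x + t • x = x := by
  obtain ⟨k, hk⟩ := hodd
  refine ⟨k + 1, fun x ↦ ?_⟩
  rw [← add_nsmul, show k + 1 + (k + 1) = Fintype.card G + 1 by lia, add_nsmul, card_nsmul_eq_zero,
    zero_add, one_nsmul]

lemma add_self_mem_bohr {x : G} (hx : x ∈ bohr Γ ((1 / 2) ^ (s + 1))) :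
    x + x ∈ bohr Γ ((1 / 2) ^ s) :=
  half_pow_succ_add_self s ▸ add_mem_bohr hx hx

variable [DecidableEq G]

-- The set `D` is a Bohr set for the characters `γ ^ t`, where `t` inverts `2`: halves of its
-- elements lie in a Bohr set for the characters `γ` themselves.
lemma exists_hereditarilyDense_bohr_of_few {A₁ B₁ A₂ B₂ : Finset G} {α : ℝ} {s' : ℕ}
    (hodd : Odd (Fintype.card G)) (hΓ : #Γ ≤ 2 ^ q) (hs : s + 1 ≤ s')
    (hs' : s' + 6 * q + 9 ≤ 2 ^ q) (hRq : rankBound P ≤ 2 ^ q) (hPq : 2 * P ≤ 2 ^ q) (hP : 12 ≤ P)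
    (hA₁ : A₁ ⊆ B₁) (hB₁ : B₁.Nonempty) (hB₁_neg : ∀ x ∈ B₁, -x ∈ B₁)
    (hα : (#A₁ : ℝ) = α * #B₁) (hPα : (1 / 2) ^ P ≤ α) (hα₁ : α ≤ 1)
    (hB₁_inv : AlmostInvariant B₁ (bohr Γ ((1 / 2) ^ s)) ((1 / 2) ^ (P + 10)))
    (hA₂ : A₂.Nonempty) (hA₂B₂ : A₂ ⊆ B₂) (hB₂ : B₂ ⊆ bohr Γ ((1 / 2) ^ (s + 1)))
    (hA₂_card : (1 / 2) ^ P * (#B₂ : ℝ) ≤ #A₂)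
    (hB₂_inv : AlmostInvariant B₂ (bohr Γ ((1 / 2) ^ s')) 1)
    (hfew : ∑ y ∈ A₂, conv (ind A₁) (ind A₁) (y + y) ≤ α * #A₁ / 2 * #A₂) :
    ∃ Γ' : Finset (AddChar G ℂ), #Γ' ≤ #Γ + rankBound P ∧
      HereditarilyDense A₁ (bohr Γ' ((1 / 2) ^ (s' + 8 * q + P + 20))) (1.005 * α) := by
  classical
  obtain ⟨t, ht⟩ := exists_nsmul_add_nsmul_eq hodd
  set Γt := Γ.image (· ^ t)
  have hΓt : #Γt ≤ #Γ := card_image_le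
  obtain ⟨r, hr, hr', hD⟩ := exists_almostInvariant_bohr (s := s' + 1) 0 (hΓt.trans hΓ) (by lia)
  set D := bohr Γt r
  have D_nonempty : D.Nonempty := ⟨0, zero_mem_bohr Γt (hr.trans' (by positivity))⟩
  have D_sub (u) (hu : u ∈ D) (v) (hv : v ∈ D) : t • (v - u) ∈ bohr Γ ((1 / 2) ^ s') :=
    nsmul_mem_bohr (bohr_mono (by linarith [half_pow_succ_add_self s']) (sub_mem_bohr hv hu))
  have hα₀ : 0 < α := lt_of_lt_of_le (by positivity) hPα
  have card_le : (#(B₂ + bohr Γ ((1 / 2) ^ s')) : ℝ) ≤ 2 ^ (4 * P) * #A₂ := by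
    calc (#(B₂ + bohr Γ ((1 / 2) ^ s')) : ℝ) ≤ (1 + 1) * #B₂ := hB₂_inv
      _ = 2 ^ (P + 1) * ((1 / 2) ^ P * #B₂) := by
          rw [pow_succ, ← mul_assoc, mul_right_comm _ 2, ← mul_pow]; norm_num
      _ ≤ 2 ^ (4 * P) * #A₂ := by gcongr <;> [norm_num; lia]
  obtain ⟨A', hA'D, hA'_card, hbad⟩ := exists_sifted_subset hP hA₁ hB₁ hB₁_neg hα hα₀ hα₁
    (zero_mem_bohr Γ (by positivity)) (fun _ ↦ neg_mem_bohr) hB₁_inv (by positivity)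
    (by rw [pow_add]; norm_num at hPα ⊢; linarith) hA₂
    (fun y hy ↦ add_self_mem_bohr (hB₂ (hA₂B₂ hy)))
    hfew D_nonempty
    (fun u hu v hv ↦ ht (v - u) ▸
      add_self_mem_bohr (bohr_mono (half_pow_le_half_pow hs) (D_sub u hu v hv)))
    (fun u hu v hv ↦ ⟨t • (v - u), ht _, fun b hb ↦
      sub_eq_add_neg b _ ▸ add_mem_add (hA₂B₂ hb) (neg_mem_bohr (D_sub u hu v hv))⟩) card_le
  have hB₁₀ : (0 : ℝ) < #B₁ := by exact_mod_cast hB₁.card_pos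
  have hA₁₀ : (0 : ℝ) < #A₁ := hα ▸ mul_pos hα₀ hB₁₀
  have hA'₀ : (0 : ℝ) < #A' := hA'_card.trans_le' (by positivity)
  obtain ⟨Γ', hΓ', hdense⟩ := exists_hereditarilyDense_bohr_of_sifted
    (s := s' + 1 + 2 * q + 0 + 2) (hΓt.trans hΓ) (by lia) hRq hPq hP hPα
    (card_pos.1 (by exact_mod_cast hA₁₀)) (card_pos.1 (by exact_mod_cast hA'₀)) hA'D hA'_card.le
    hbad (by simpa only [pow_zero] using hD)
  exact ⟨Γ', by lia, hdense.mono (bohr_mono (half_pow_le_half_pow (by lia)))⟩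

lemma exists_hereditarilyDense_bohr_or_le_threeAPCount {A B₁ B₂ : Finset G} {x : G} {a b : ℝ}
    {s' : ℕ} (hodd : Odd (Fintype.card G)) (hΓ : #Γ ≤ 2 ^ q) (hs : s + 1 ≤ s')
    (hs' : s' + 6 * q + 9 ≤ 2 ^ q) (hRq : rankBound P ≤ 2 ^ q) (hPq : 2 * P ≤ 2 ^ q) (hP : 12 ≤ P)
    (hb : 0 < b) (hB₁_card : b ≤ #B₁) (hB₂_card : b ≤ #B₂) (hB₁_neg : ∀ x ∈ B₁, -x ∈ B₁)
    (hB₁_inv : AlmostInvariant B₁ (bohr Γ ((1 / 2) ^ s)) ((1 / 2) ^ (P + 10)))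
    (hB₂ : B₂ ⊆ bohr Γ ((1 / 2) ^ (s + 1)))
    (hB₂_inv : AlmostInvariant B₂ (bohr Γ ((1 / 2) ^ s')) 1) (ha : (1 / 2) ^ P ≤ a)
    (hA₁ : a * (#B₁ : ℝ) ≤ #{b ∈ B₁ | x + b ∈ A}) (hA₂ : a * (#B₂ : ℝ) ≤ #{b ∈ B₂ | x + b ∈ A}) :
    (∃ Γ' : Finset (AddChar G ℂ), #Γ' ≤ #Γ + rankBound P ∧
      HereditarilyDense A (bohr Γ' ((1 / 2) ^ (s' + 8 * q + P + 20))) (1.005 * a)) ∨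
    (1 / 2) ^ (3 * P + 1) * b ^ 2 ≤ threeAPCount A := by
  set A₁ := {b ∈ B₁ | x + b ∈ A}
  set A₂ := {b ∈ B₂ | x + b ∈ A}
  have ha₀ : 0 < a := lt_of_lt_of_le (by positivity) ha
  have hA₁_translate (b) (hb : b ∈ A₁) : x + b ∈ A := (mem_filter.1 hb).2
  have hA₂_translate (b) (hb : b ∈ A₂) : x + b ∈ A := (mem_filter.1 hb).2
  have hB₁₀ : (0 : ℝ) < #B₁ := hb.trans_le hB₁_card
  have hA₂₀ : (0 : ℝ) < #A₂ := hA₂.trans_lt' (mul_pos ha₀ (hb.trans_le hB₂_card))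
  obtain ⟨α, hα⟩ : ∃ α : ℝ, (#A₁ : ℝ) = α * #B₁ := ⟨_, (div_mul_cancel₀ _ hB₁₀.ne').symm⟩
  have haα : a ≤ α := le_of_mul_le_mul_right (hA₁.trans_eq hα) hB₁₀
  have hα₁ : α ≤ 1 := by
    refine le_of_mul_le_mul_right ?_ hB₁₀
    rw [← hα, one_mul]
    exact_mod_cast card_filter_le _ _
  rcases le_or_gt (∑ y ∈ A₂, conv (ind A₁) (ind A₁) (y + y)) (α * #A₁ / 2 * #A₂) with few | many
  · obtain ⟨Γ', hΓ', hdense⟩ := exists_hereditarilyDense_bohr_of_few hodd hΓ hs hs' hRq hPq hP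
      (filter_subset _ _) (card_pos.1 (by exact_mod_cast hB₁₀)) hB₁_neg hα (ha.trans haα) hα₁
      hB₁_inv (card_pos.1 (by exact_mod_cast hA₂₀)) (filter_subset _ _) hB₂
      (hA₂.trans' (by gcongr)) hB₂_inv few
    exact .inl ⟨Γ', hΓ', (hdense.of_translate hA₁_translate).anti (by gcongr)⟩
  · refine .inr (le_trans ?_ (many.le.trans
      (sum_conv_le_threeAPCount hA₁_translate hA₂_translate)))
    exact half_pow_mul_sq_le hb.le (ha.trans haα) (hA₁.trans' (by gcongr)) (hA₂.trans' (by gcongr))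

lemma exists_increment_or_le_threeAPCount {A : Finset G} {a : ℝ} {d : ℕ}
    (hodd : Odd (Fintype.card G)) (hΓ : #Γ ≤ d) (hd : d ≤ 2 ^ q)
    (hs : s + 12 * q + 3 * P + 45 ≤ 2 ^ q) (hRq : rankBound P ≤ 2 ^ q) (hPq : 2 * P ≤ 2 ^ q)
    (hP : 12 ≤ P) (ha : (1 / 2) ^ P ≤ a / 2)
    (hA : HereditarilyDense A (bohr Γ ((1 / 2) ^ s)) a) :
    (∃ Γ' : Finset (AddChar G ℂ), #Γ' ≤ d + rankBound P ∧
      HereditarilyDense A (bohr Γ' ((1 / 2) ^ (s + 12 * q + 3 * P + 45))) (1.001 * a)) ∨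
    (1 / 2) ^ (3 * P + 1) *
      ((Fintype.card G : ℝ) * (1 / 4) ^ (d * (s + 12 * q + 3 * P + 48))) ^ 2 ≤ threeAPCount A := by
  have half_pow_pos : (0 : ℝ) < (1 / 2) ^ P := by positivity
  have error_le : (1 / 2 : ℝ) ^ (P + 10) ≤ 0.0005 * a := by rw [pow_add]; linarith
  obtain ⟨r₁, hr₁, hr₁', hB₁_inv⟩ :=
    exists_almostInvariant_bohr (s := s) (P + 10) (hΓ.trans hd) (by lia)
  set s₁ := s + 2 * q + (P + 10) + 2
  obtain ⟨r₂, hr₂, hr₂', hB₂_inv⟩ :=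
    exists_almostInvariant_bohr (s := s₁ + 1) (P + 10) (hΓ.trans hd) (by lia)
  set B₁ := bohr Γ r₁
  set B₂ := bohr Γ r₂
  have B₁_nonempty : B₁.Nonempty := ⟨0, zero_mem_bohr Γ (hr₁.trans' (by positivity))⟩
  have B₂_nonempty : B₂.Nonempty := ⟨0, zero_mem_bohr Γ (hr₂.trans' (by positivity))⟩
  rcases hA.increment_or_exists_dense_translate (bohr_mono hr₁')
    (bohr_mono (hr₂'.trans (half_pow_le_half_pow (by lia)))) B₁_nonempty B₂_nonempty
    (W := bohr Γ ((1 / 2) ^ (s + 12 * q + 3 * P + 45))) (zero_mem_bohr Γ (by positivity))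
    (fun _ ↦ neg_mem_bohr) (hB₁_inv.mono (bohr_mono (half_pow_le_half_pow (by lia))) error_le)
    (hB₂_inv.mono (bohr_mono (half_pow_le_half_pow (by lia))) error_le)
    with increment | ⟨x, hA₁_card, hA₂_card⟩
  · exact .inl ⟨Γ, by lia, increment⟩
  have card_bohr_ge {r : ℝ} (hr : (1 / 2) ^ (s + 12 * q + 3 * P + 45) ≤ r) :
      (Fintype.card G : ℝ) * (1 / 4) ^ (d * (s + 12 * q + 3 * P + 48)) ≤ #(bohr Γ r) :=
    card_mul_quarter_pow_le_card_bohr hΓ hr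
  rcases exists_hereditarilyDense_bohr_or_le_threeAPCount (s := s₁) hodd (hΓ.trans hd)
    (s' := s₁ + 1 + 2 * q + (P + 10) + 2) (by lia) (by lia) hRq hPq hP (by positivity)
    (card_bohr_ge ((half_pow_le_half_pow (by lia)).trans hr₁))
    (card_bohr_ge ((half_pow_le_half_pow (by lia)).trans hr₂)) (fun _ ↦ neg_mem_bohr) hB₁_inv
    (bohr_mono hr₂') (hB₂_inv.mono Subset.rfl (pow_le_one₀ (by norm_num) (by norm_num)))
    (by linarith) hA₁_card hA₂_card with ⟨Γ', hΓ', hdense⟩ | many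
  · exact .inl ⟨Γ', by lia, hdense.anti (by linarith) |>.mono
      (bohr_mono (half_pow_le_half_pow (by lia)))⟩
  · exact .inr many

end IncrementOrMany

/-! ### Iteration -/

section Iteration

variable {G : Type*} [AddCommGroup G] [Fintype G] [DecidableEq G] {P q J : ℕ} {A : Finset G} {a : ℝ}

lemma exists_hereditarilyDense_bohr_of_threeAPCount_lt (hodd : Odd (Fintype.card G)) (hP : 12 ≤ P)
    (hJR : J * rankBound P ≤ 2 ^ q) (hJq : J * (12 * q + 3 * P + 45) ≤ 2 ^ q)
    (ha : (1 / 2) ^ P ≤ a / 2) (hA : a * Fintype.card G ≤ #A)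
    (hcount : threeAPCount A < (1 / 2) ^ (3 * P + 1) * ((Fintype.card G : ℝ) *
      (1 / 4) ^ (J * rankBound P * (J * (12 * q + 3 * P + 45) + 3))) ^ 2) :
    ∀ j ≤ J, ∃ Γ : Finset (AddChar G ℂ), #Γ ≤ j * rankBound P ∧
      HereditarilyDense A (bohr Γ ((1 / 2) ^ (j * (12 * q + 3 * P + 45)))) (1.001 ^ j * a) := by
  intro j
  induction j with
  | zero =>
    exact fun _ ↦ ⟨∅, by simp, hereditarilyDense_of_le_card (by simpa using hA)
      (zero_mem_bohr _ (by positivity)) fun _ ↦ neg_mem_bohr⟩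
  | succ j ih =>
    intro hj
    obtain ⟨Γ, hΓ, hdense⟩ := ih (by lia)
    have rank_le : (j + 1) * rankBound P ≤ J * rankBound P := Nat.mul_le_mul_right _ hj
    have scale_le := Nat.mul_le_mul_right (12 * q + 3 * P + 45) hj
    rw [add_one_mul] at rank_le scale_le
    have ha₀ : 0 < a := by linarith [pow_pos (one_half_pos (α := ℝ)) P]
    have ha_le : a ≤ 1.001 ^ j * a := le_mul_of_one_le_left ha₀.le (one_le_pow₀ (by norm_num))
    rcases exists_increment_or_le_threeAPCount (q := q) hodd hΓ (by lia) (by lia) (by lia) (by lia)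
      hP (ha.trans (by linarith)) hdense with ⟨Γ', hΓ', hdense'⟩ | hmany
    · refine ⟨Γ', by lia, ?_⟩
      rw [add_one_mul, pow_succ', mul_assoc]
      exact hdense'.mono (bohr_mono (half_pow_le_half_pow (by lia)))
    · refine absurd (hmany.trans_lt hcount) (not_lt.2 ?_)
      have exponent_le : j * rankBound P * (j * (12 * q + 3 * P + 45) + 12 * q + 3 * P + 48) ≤
          J * rankBound P * (J * (12 * q + 3 * P + 45) + 3) := Nat.mul_le_mul (by lia) (by lia)
      have := pow_le_pow_of_le_one (by norm_num : (0 : ℝ) ≤ 1 / 4) (by norm_num) exponent_le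
      gcongr

lemma rankBound_le (hP : 0 < P) : rankBound P ≤ 2 ^ 42 * P ^ 6 := by
  have one_le : 1 ≤ P ^ 2 := Nat.one_le_pow _ _ hP
  have one_le' : 1 ≤ P ^ 6 := Nat.one_le_pow _ _ hP
  have le_sq : P ≤ P ^ 2 := Nat.le_self_pow (by norm_num) P
  calc rankBound P
      ≤ 8 * (4 * P ^ 6 + (71 * P ^ 2) * (64000000 * P ^ 2 * (86 * P ^ 2))) := by
        unfold rankBound sampleSize
        gcongr <;> lia
    _ = (8 * (4 + 71 * 64000000 * 86)) * P ^ 6 := by ring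
    _ ≤ 2 ^ 42 * P ^ 6 := by gcongr; norm_num

lemma two_le_pow_thousand : (2 : ℝ) ≤ 1.001 ^ 1000 := by
  calc (2 : ℝ) = 1 + (1000 : ℕ) * 0.001 := by norm_num
    _ ≤ (1 + 0.001) ^ 1000 := one_add_mul_le_pow (by norm_num) 1000
    _ = 1.001 ^ 1000 := by congr 1; norm_num

lemma one_lt_pow_mul_half_pow (P : ℕ) : (1 : ℝ) < 1.001 ^ (1000 * P) * (2 * (1 / 2) ^ P) := by
  calc (1 : ℝ) < 2 ^ P * (2 * (1 / 2) ^ P) := by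
        rw [mul_left_comm, ← mul_pow]; norm_num
    _ ≤ (1.001 ^ 1000) ^ P * (2 * (1 / 2) ^ P) := by
        have := two_le_pow_thousand
        generalize (1.001 : ℝ) ^ 1000 = growth at *
        gcongr
    _ = 1.001 ^ (1000 * P) * (2 * (1 / 2) ^ P) := by rw [pow_mul]

lemma mul_pow_le_two_pow {k m n : ℕ} (h : k + m * P ≤ n) : 2 ^ k * P ^ m ≤ 2 ^ n := by
  calc 2 ^ k * P ^ m ≤ 2 ^ k * (2 ^ P) ^ m := by gcongr; exact Nat.lt_two_pow_self.le
    _ = 2 ^ (k + m * P) := by rw [← pow_mul, mul_comm P, ← pow_add]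
    _ ≤ 2 ^ n := Nat.pow_le_pow_right two_pos h

theorem half_pow_mul_card_sq_le_threeAPCount (hodd : Odd (Fintype.card G)) (hP : 12 ≤ P)
    (hA : 2 * (1 / 2) ^ P * (Fintype.card G : ℝ) ≤ #A) :
    (1 / 2) ^ (2 ^ 75 * P ^ 9) * (Fintype.card G : ℝ) ^ 2 ≤ threeAPCount A := by
  set rank := 1000 * P * rankBound P
  set scale := 1000 * P * (12 * (60 * P) + 3 * P + 45) with hscale
  have rank_le : rank ≤ 2 ^ 52 * P ^ 7 := by
    calc rank ≤ 1000 * P * (2 ^ 42 * P ^ 6) := Nat.mul_le_mul_left _ (rankBound_le (by lia))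
      _ = 1000 * 2 ^ 42 * P ^ 7 := by ring
      _ ≤ 2 ^ 52 * P ^ 7 := by gcongr; norm_num
  have scale_add_le : scale + 3 ≤ 2 ^ 20 * P ^ 2 := by
    calc scale + 3 ≤ 1000 * P * (1000 * P) := by rw [hscale]; nlinarith
      _ = 1000000 * P ^ 2 := by ring
      _ ≤ 2 ^ 20 * P ^ 2 := by gcongr; norm_num
  have exponent_le : 3 * P + 1 + 4 * (rank * (scale + 3)) ≤ 2 ^ 75 * P ^ 9 := by
    have rank_mul_scale_le : rank * (scale + 3) ≤ 2 ^ 72 * P ^ 9 := by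
      calc rank * (scale + 3) ≤ 2 ^ 52 * P ^ 7 * (2 ^ 20 * P ^ 2) := by gcongr
        _ = 2 ^ 72 * P ^ 9 := by ring
    have le_pow : P ≤ P ^ 9 := Nat.le_self_pow (by norm_num) P
    lia
  have half_pow_le : (1 / 2) ^ (2 ^ 75 * P ^ 9) * (Fintype.card G : ℝ) ^ 2 ≤
      (1 / 2) ^ (3 * P + 1) * ((Fintype.card G : ℝ) * (1 / 4) ^ (rank * (scale + 3))) ^ 2 := by
    rw [show (1 / 4 : ℝ) = (1 / 2) ^ 2 by norm_num, ← pow_mul, mul_pow, ← pow_mul, mul_left_comm,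
      ← pow_add, mul_comm]
    gcongr _ * ?_
    exact half_pow_le_half_pow (by lia)
  by_contra! hcount
  obtain ⟨Γ, -, hdense⟩ := exists_hereditarilyDense_bohr_of_threeAPCount_lt (q := 60 * P) hodd hP
    (rank_le.trans (mul_pow_le_two_pow (by lia)))
    ((Nat.le_add_right scale 3).trans (scale_add_le.trans (mul_pow_le_two_pow (by lia))))
    (by linarith) hA (hcount.trans_le half_pow_le) (1000 * P) le_rfl
  exact (one_lt_pow_mul_half_pow P).not_ge (hdense.le_one (zero_mem_bohr _ (by positivity)))

theorem exp_neg_log_pow_le_threeAPCount_div (hodd : Odd (Fintype.card G)) (hA : A.Nonempty)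
    {α : ℝ} (hα : α = #A / Fintype.card G) :
    Real.exp (-(2 ^ 75 * 13 ^ 9 * (1 - Real.log α) ^ 9)) ≤
      threeAPCount A / (Fintype.card G : ℝ) ^ 2 := by
  have hcard : 0 < (Fintype.card G : ℝ) := mod_cast Fintype.card_pos
  have hα₀ : 0 < α := by rw [hα]; have := hA.card_pos; positivity
  have hα₁ : α ≤ 1 := by rw [hα, div_le_one hcard]; exact_mod_cast card_le_univ A
  have hlog := Real.log_nonpos hα₀.le hα₁
  set P := ⌈-2 * Real.log α⌉₊ + 12 with hP
  have P_le : (P : ℝ) ≤ 13 * (1 - Real.log α) := by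
    have := Nat.ceil_lt_add_one (a := -2 * Real.log α) (by linarith)
    push_cast [hP]
    linarith
  have half_pow_le : 2 * (1 / 2) ^ P ≤ α := by
    have := Nat.le_ceil (-2 * Real.log α)
    have := Real.log_two_gt_d9
    rw [← Real.log_le_log_iff (by positivity) hα₀, Real.log_mul two_ne_zero (by positivity),
      Real.log_pow, one_div, Real.log_inv]
    push_cast [hP]
    nlinarith
  have count_ge : (1 / 2) ^ (2 ^ 75 * P ^ 9) * (Fintype.card G : ℝ) ^ 2 ≤ threeAPCount A :=
    half_pow_mul_card_sq_le_threeAPCount hodd (by lia) (by rwa [← le_div_iff₀ hcard, ← hα])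
  rw [le_div_iff₀ (by positivity)]
  refine le_trans (mul_le_mul_of_nonneg_right ?_ (by positivity)) count_ge
  calc Real.exp (-(2 ^ 75 * 13 ^ 9 * (1 - Real.log α) ^ 9))
      ≤ Real.exp (-(2 ^ 75 * P ^ 9 : ℕ)) := by
        rw [Nat.cast_mul, Nat.cast_pow, Nat.cast_pow, Nat.cast_ofNat, mul_assoc, ← mul_pow]
        gcongr
    _ ≤ (1 / 2) ^ (2 ^ 75 * P ^ 9) := by
        rw [Real.exp_neg, one_div, inv_pow]
        exact inv_anti₀ (by positivity) (two_pow_le_exp _)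

lemma one_sub_log_pow_le {ε α : ℝ} (hε : 0 < ε) (hα₀ : 0 < α) (hα₁ : α ≤ 1) (n : ℕ) :
    (1 - Real.log α) ^ n ≤ n.factorial / ε ^ n * Real.exp ε * α ^ (-ε) := by
  have hlog := Real.log_nonpos hα₀.le hα₁
  have pow_le : (ε * (1 - Real.log α)) ^ n ≤ n.factorial * Real.exp (ε * (1 - Real.log α)) := by
    rw [← div_le_iff₀' (by positivity)]
    exact Real.pow_div_factorial_le_exp _ (mul_nonneg hε.le (by linarith)) n
  have exp_eq : Real.exp (ε * (1 - Real.log α)) = Real.exp ε * α ^ (-ε) := by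
    rw [Real.rpow_def_of_pos hα₀, ← Real.exp_add]
    ring_nf
  rw [exp_eq, mul_pow, ← le_div_iff₀' (by positivity)] at pow_le
  exact pow_le.trans_eq (by ring)

end Iteration

end KelleyMeka

open KelleyMeka in
theorem count_threeAPs_lower_bound_general.{u} {c : ℝ} (hc : c < 1) :
    ∃ C > 0, ∀ (G : Type u) [AddCommGroup G] [Fintype G] [DecidableEq G], Odd (Fintype.card G) →
      ∀ A : Finset G, A.Nonempty → ∀ α : ℝ, α = #A / Fintype.card G →
        Real.exp (-(C * α ^ (-1 + c))) ≤ threeAPCount A / (Fintype.card G : ℝ) ^ 2 := by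
  have hε : 0 < 1 - c := sub_pos.2 hc
  refine ⟨2 ^ 75 * 13 ^ 9 * (Nat.factorial 9 / (1 - c) ^ 9 * Real.exp (1 - c)), by positivity, ?_⟩
  intro G _ _ _ hodd A hA α hα
  have hα₀ : 0 < α := by rw [hα]; have := hA.card_pos; positivity
  have hα₁ : α ≤ 1 := by rw [hα]; exact div_le_one_of_le₀ (mod_cast card_le_univ A) (by positivity)
  refine le_trans ?_ (exp_neg_log_pow_le_threeAPCount_div hodd hA hα)
  rw [mul_assoc, show -1 + c = -(1 - c) by ring]
  gcongr
  exact one_sub_log_pow_le hε hα₀ hα₁ 9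

open scoped Classical in
/-- **Theorem 2 (Bloom–Sisask).** There are absolute constants `c ∈ (0,1)` and `C > 0`
such that for every finite abelian group `G` of odd order and every nonempty `A ⊆ G`
of density `α = |A|/|G|`, the normalized count of three-term arithmetic progressions
`T(A) = 𝔼_{x,d} 1_A(x) 1_A(x+d) 1_A(x+2d)` satisfies `T(A) ≥ exp(−C·α^{−1+c})`. -/
theorem count_threeAPs_lower_bound :
    ∃ c C : ℝ, c ∈ Set.Ioo (0 : ℝ) 1 ∧ 0 < C ∧
      ∀ (G : Type) [AddCommGroup G] [Fintype G], Odd (Fintype.card G) →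
        ∀ A : Finset G, A.Nonempty →
          ∀ α : ℝ, α = (A.card : ℝ) / Fintype.card G →
            Real.exp (-(C * α ^ (-1 + c))) ≤
              (∑ x : G, ∑ d : G,
                  (if x ∈ A then (1 : ℝ) else 0) * (if x + d ∈ A then (1 : ℝ) else 0) *
                    (if x + d + d ∈ A then (1 : ℝ) else 0)) / (Fintype.card G : ℝ) ^ 2 := by
  obtain ⟨C, hC, hcount⟩ := count_threeAPs_lower_bound_general (c := 1 / 2) (by norm_num)
  exact ⟨1 / 2, C, by norm_num, hC, fun G _ _ ↦ hcount G⟩
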